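/- arXiv:2206.03465 — 8 statements merged into one kernel-verified Lean document; each statement's English description precedes it below -/
import Mathlib

section
/- Let F be a field, let G be a finitely generated group, let g ∈ G, and let ρ : G → GL_n(F) be a group homomorphism with ρ(g) ≠ I_n. Then there exist n' ∈ ℕ and a group homomorphism ρ' : G → GL_{n'}(F) such that for every x ∈ G the matrix ρ'(x) is either the identity matrix I_{n'} or the permutation matrix of a derangement of {1,…,n'}, and such that ρ'(g) ≠ I_{n'}. -/
/-- The permutation matrix of a permutation `σ` of `{1,…,n}`: the 0–1 matrix whose
`(i,j)` entry is `1` exactly when `i = σ j`. -/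
def permMatrix {n : ℕ} (R : Type*) [Zero R] [One R] (σ : Equiv.Perm (Fin n)) :
    Matrix (Fin n) (Fin n) R :=
  Matrix.of fun i j => if i = σ j then 1 else 0

/-!
A finitely generated subgroup of `GL_n(R)` lies in `GL_n(A)` for a finitely generated subring `A`
of `R`. By the Nullstellensatz over `ℤ` the residue fields of `A` at maximal ideals are finite,
hence so are the rings `A ⧸ m ^ k`, and Krull's intersection theorem shows that these quotients
separate the points of `A`. Reducing entries modulo `m ^ k` therefore gives Mal'cev's theorem: the
subgroup is residually finite. It remains to let a finite quotient act on itself by left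
multiplication, where no element other than the identity has a fixed point.
-/

section FiniteQuotients

theorem isJacobsonRing_of_jacobson_bot_eq_bot {R : Type*} [CommRing R] [Ring.DimensionLEOne R]
    (h : (⊥ : Ideal R).jacobson = ⊥) : IsJacobsonRing R := by
  rw [isJacobsonRing_iff_prime_eq]
  intro P hP
  obtain rfl | hP_ne_bot := eq_or_ne P ⊥
  · exact h
  · have : P.IsMaximal := Ring.DimensionLEOne.maximalOfPrime hP_ne_bot hP
    exact Ideal.jacobson_eq_self_of_isMaximal

theorem jacobson_bot_int : (⊥ : Ideal ℤ).jacobson = ⊥ := by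
  rw [eq_bot_iff]
  intro x hx
  have hunit : IsUnit (x * x + 1) := Ideal.mem_jacobson_bot.mp hx x
  have hsq : x * x = 0 := by
    rcases Int.isUnit_iff.mp hunit with h | h <;> linarith [mul_self_nonneg x]
  exact mul_self_eq_zero.mp hsq

instance isJacobsonRing_int : IsJacobsonRing ℤ :=
  isJacobsonRing_of_jacobson_bot_eq_bot jacobson_bot_int

theorem exists_isMaximal_notMem_pow {A : Type*} [CommRing A] [IsNoetherianRing A] {d : A}
    (hd : d ≠ 0) : ∃ m : Ideal A, m.IsMaximal ∧ ∃ k : ℕ, d ∉ m ^ k := by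
  obtain ⟨m, hm, hann⟩ := Ideal.exists_le_maximal (Ideal.span {d}).annihilator (by
    simpa [Submodule.annihilator_eq_top_iff] using hd)
  refine ⟨m, hm, ?_⟩
  by_contra! hmem
  obtain ⟨⟨r, hr⟩, hrd⟩ := (m.mem_iInf_smul_pow_eq_bot_iff d).mp (by simpa using hmem)
  have hsub : 1 - r ∈ m := hann <| by
    rw [Submodule.mem_annihilator_span_singleton, sub_smul, one_smul, hrd, sub_self]
  exact hm.ne_top <| m.eq_top_of_isUnit_mem (by simpa using m.add_mem hsub hr) isUnit_one

variable {A : Type*} [CommRing A] [Algebra.FiniteType ℤ A]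

theorem finite_field_of_surjective_of_finiteType_int {K : Type*} [Field K] {f : A →+* K}
    (hf : Function.Surjective f) : Finite K := by
  have : Algebra.FiniteType ℤ K := .of_surjective f.toIntAlgHom hf
  have : Module.Finite ℤ K := finite_of_finite_type_of_isJacobsonRing ℤ K
  have hker : ¬ Function.Injective (algebraMap ℤ K) := fun hinj =>
    Int.not_isField (isField_of_isIntegral_of_isField hinj (Field.toIsField K))
  obtain ⟨a, ha, ha_ne_zero⟩ : ∃ a : ℤ, algebraMap ℤ K a = 0 ∧ a ≠ 0 := by
    simpa only [injective_iff_map_eq_zero, not_forall, exists_prop] using hker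
  refine Module.finite_of_fg_torsion K fun x => ⟨⟨a, mem_nonZeroDivisors_of_ne_zero ha_ne_zero⟩, ?_⟩
  change a • x = 0
  rw [Algebra.smul_def, ha, zero_mul]

theorem finite_quotient_pow_of_isMaximal (m : Ideal A) [m.IsMaximal] (k : ℕ) :
    Finite (A ⧸ m ^ k) := by
  let _ : Field (A ⧸ m) := Ideal.Quotient.field m
  have hmk : Function.Surjective (Ideal.Quotient.mk m) := Ideal.Quotient.mk_surjective
  have : Finite (A ⧸ m) := finite_field_of_surjective_of_finiteType_int hmk
  have : IsNoetherianRing A := Algebra.FiniteType.isNoetherianRing ℤ A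
  exact Ideal.finite_quotient_pow (IsNoetherian.noetherian m) k

theorem exists_finite_quotient_notMem {d : A} (hd : d ≠ 0) :
    ∃ I : Ideal A, Finite (A ⧸ I) ∧ d ∉ I := by
  have : IsNoetherianRing A := Algebra.FiniteType.isNoetherianRing ℤ A
  obtain ⟨m, _, k, hk⟩ := exists_isMaximal_notMem_pow hd
  exact ⟨m ^ k, finite_quotient_pow_of_isMaximal m k, hk⟩

end FiniteQuotients

section Malcev

open Matrix

theorem residuallyFinite_of_injective {G H : Type*} [Group G] [Group H] [Group.ResiduallyFinite H]
    (f : G →* H) (hf : Function.Injective f) : Group.ResiduallyFinite G := by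
  rw [Group.residuallyFinite_iff_forall_finiteIndexNormalSubgroup]
  intro g hg
  have hfg : f g = 1 :=
    Group.eq_one_iff_forall_finiteIndexNormalSubroup (f g) fun K => hg (K.comap f)
  exact (map_eq_one_iff f hf).mp hfg

variable {n : Type*} [Fintype n] [DecidableEq n] {R : Type*} [CommRing R]

instance residuallyFinite_generalLinearGroup [Algebra.FiniteType ℤ R] :
    Group.ResiduallyFinite (GL n R) := by
  refine Group.residuallyFinite_of_forall_exists_finite_monoidHom fun M hM => ?_
  obtain ⟨i, j, hij⟩ : ∃ i j, M i j ≠ (1 : Matrix n n R) i j := by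
    by_contra! h
    exact hM (GeneralLinearGroup.ext h)
  obtain ⟨I, _, hI⟩ := exists_finite_quotient_notMem (sub_ne_zero.mpr hij)
  refine ⟨GL n (R ⧸ I), inferInstance, .of_injective Units.val Units.val_injective,
    GeneralLinearGroup.map (Ideal.Quotient.mk I), fun hmap => hI ?_⟩
  have hentry : Ideal.Quotient.mk I (M i j) = (1 : Matrix n n (R ⧸ I)) i j :=
    congrArg (fun N : GL n (R ⧸ I) => N i j) hmap
  rw [← Ideal.Quotient.eq, hentry, one_apply, one_apply]
  split_ifs <;> simp

theorem generalLinearGroup_map_injective {S : Type*} [CommRing S] {f : R →+* S}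
    (hf : Function.Injective f) :
    Function.Injective (GeneralLinearGroup.map f : GL n R →* GL n S) :=
  Units.map_injective (Matrix.map_injective hf)

theorem mem_range_generalLinearGroup_map_subtype {A : Subring R} {M : GL n R}
    (hM : ∀ i j, M i j ∈ A) (hMinv : ∀ i j, M⁻¹ i j ∈ A) :
    M ∈ (GeneralLinearGroup.map A.subtype : GL n A →* GL n R).range := by
  let N : Matrix n n A := of fun i j => ⟨M i j, hM i j⟩
  let N' : Matrix n n A := of fun i j => ⟨M⁻¹ i j, hMinv i j⟩
  have hinj : Function.Injective (A.subtype.mapMatrix : Matrix n n A →+* Matrix n n R) :=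
    Matrix.map_injective A.subtype_injective
  have hNN' : N * N' = 1 := hinj <| by
    rw [map_mul, map_one]
    exact M.mul_inv
  have hN'N : N' * N = 1 := hinj <| by
    rw [map_mul, map_one]
    exact M.inv_mul
  exact ⟨⟨N, N', hNN', hN'N⟩, rfl⟩

theorem exists_finiteType_le_range_generalLinearGroup_map {H : Subgroup (GL n R)} (hH : H.FG) :
    ∃ A : Subalgebra ℤ R, Algebra.FiniteType ℤ A ∧
      H ≤ (GeneralLinearGroup.map A.toSubring.subtype : GL n A →* GL n R).range := by
  obtain ⟨S, rfl⟩ := hH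
  let entries (M : GL n R) : Set R := Set.range fun p : n × n => M p.1 p.2
  let T : Set R := ⋃ M ∈ S, entries M ∪ entries M⁻¹
  have hT : T.Finite := S.finite_toSet.biUnion fun M _ =>
    (Set.finite_range _).union (Set.finite_range _)
  refine ⟨Algebra.adjoin ℤ T, .adjoin_of_finite hT, (Subgroup.closure_le _).mpr fun M hM => ?_⟩
  exact mem_range_generalLinearGroup_map_subtype
    (fun i j => Algebra.subset_adjoin (Set.mem_biUnion hM (.inl ⟨(i, j), rfl⟩)))
    (fun i j => Algebra.subset_adjoin (Set.mem_biUnion hM (.inr ⟨(i, j), rfl⟩)))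

theorem residuallyFinite_of_fg_subgroup_generalLinearGroup {H : Subgroup (GL n R)} (hH : H.FG) :
    Group.ResiduallyFinite H := by
  obtain ⟨A, _, hle⟩ := exists_finiteType_le_range_generalLinearGroup_map hH
  have hinj : Function.Injective (GeneralLinearGroup.map A.toSubring.subtype : GL n A →* GL n R) :=
    generalLinearGroup_map_injective A.toSubring.subtype_injective
  have : Group.ResiduallyFinite
      (GeneralLinearGroup.map A.toSubring.subtype : GL n A →* GL n R).range :=
    residuallyFinite_of_injective (MonoidHom.ofInjective hinj).symm.toMonoidHom
      (MulEquiv.injective _)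
  exact residuallyFinite_of_injective (Subgroup.inclusion hle) (Subgroup.inclusion_injective hle)

end Malcev

section DerangementRep

open Matrix

theorem permMatrix_eq_inv_permMatrix {n : ℕ} (S : Type*) [Zero S] [One S]
    (σ : Equiv.Perm (Fin n)) : permMatrix S σ = σ⁻¹.permMatrix S := by
  ext i j
  simp [permMatrix, PEquiv.toMatrix_apply, Equiv.eq_symm_apply, eq_comm]

theorem permMatrix_injective {n : ℕ} (S : Type*) [Zero S] [One S] [NeZero (1 : S)] :
    Function.Injective (permMatrix S : Equiv.Perm (Fin n) → Matrix (Fin n) (Fin n) S) := by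
  intro σ τ h
  ext1 j
  by_contra hne
  simpa [permMatrix, hne] using congrFun₂ h (σ j) j

/-- The homomorphism into `GL_n(S)` sending a permutation to its permutation matrix. -/
def permMatrixGL {n : ℕ} (S : Type*) [Semiring S] : Equiv.Perm (Fin n) →* GL (Fin n) S :=
  MonoidHom.toHomUnits
    { toFun := permMatrix S
      map_one' := by rw [permMatrix_eq_inv_permMatrix, inv_one, permMatrix_one]
      map_mul' := fun σ τ => by
        simp only [permMatrix_eq_inv_permMatrix, _root_.mul_inv_rev, permMatrix_mul] }

theorem permMatrixGL_injective {n : ℕ} (S : Type*) [Semiring S] [Nontrivial S] :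
    Function.Injective (permMatrixGL S : Equiv.Perm (Fin n) →* GL (Fin n) S) := fun _ _ h =>
  permMatrix_injective S (congrArg Units.val h)

variable (H : Type*) [Group H] [Finite H]

/-- The left regular representation of a finite group, as permutations of `{1,…,|H|}` through an
arbitrary enumeration of `H`. -/
noncomputable def cayleyHom : H →* Equiv.Perm (Fin (Nat.card H)) :=
  (Finite.equivFin H).permCongrHom.toMonoidHom.comp (MulAction.toPermHom H H)

theorem cayleyHom_injective : Function.Injective (cayleyHom H) :=
  (Finite.equivFin H).permCongrHom.injective.comp MulAction.toPerm_injective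

variable {H} in
theorem cayleyHom_mem_derangements {x : H} (hx : x ≠ 1) :
    cayleyHom H x ∈ derangements (Fin (Nat.card H)) := by
  intro i hi
  let e := Finite.equivFin H
  have hfix : e (x * e.symm i) = i := hi
  rw [← Equiv.eq_symm_apply] at hfix
  exact hx (mul_eq_right.mp hfix)

end DerangementRep

theorem statement0_general {R : Type*} [CommRing R] {n : Type*} [Fintype n] [DecidableEq n]
    (S : Type*) [Semiring S] [Nontrivial S] {G : Type*} [Group G] [Group.FG G] (g : G)
    (ρ : G →* Matrix.GeneralLinearGroup n R) (hg : ρ g ≠ 1) :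
    ∃ (n' : ℕ) (ρ' : G →* Matrix.GeneralLinearGroup (Fin n') S),
      (∀ x : G, ((ρ' x : Matrix (Fin n') (Fin n') S) = 1 ∨
        ∃ σ : Equiv.Perm (Fin n'), (∀ i, σ i ≠ i) ∧
          (ρ' x : Matrix (Fin n') (Fin n') S) = permMatrix S σ)) ∧
      ρ' g ≠ 1 := by
  have hfg : ρ.range.FG := (Group.fg_iff_subgroup_fg _).mp inferInstance
  have : Group.ResiduallyFinite ρ.range := residuallyFinite_of_fg_subgroup_generalLinearGroup hfg
  obtain ⟨N, hN⟩ := Group.exists_finiteIndexNormalSubgroup_notMem (ρ.rangeRestrict g)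
    fun h => hg (congrArg Subtype.val h)
  let Q := ρ.range ⧸ N.toSubgroup
  let φ : G →* Q := (QuotientGroup.mk' N.toSubgroup).comp ρ.rangeRestrict
  have hφ : φ g ≠ 1 := fun h => hN ((QuotientGroup.eq_one_iff _).mp h)
  refine ⟨Nat.card Q, (permMatrixGL S).comp ((cayleyHom Q).comp φ), fun x => ?_, fun h => hφ ?_⟩
  · by_cases hx : φ x = 1
    · left
      simp [hx]
    · exact .inr ⟨cayleyHom Q (φ x), cayleyHom_mem_derangements hx, rfl⟩
  · have hinj := (permMatrixGL_injective S).comp (cayleyHom_injective Q)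
    exact hinj (h.trans (by simp))

/-- Let `F` be a field, `G` a finitely generated group, `g ∈ G`, and
`ρ : G → GL_n(F)` a group homomorphism with `ρ(g) ≠ 1`. Then there exist `n' ∈ ℕ` and a
homomorphism `ρ' : G → GL_{n'}(F)` such that every `ρ'(x)` is either the identity matrix
or the permutation matrix of a derangement, and `ρ'(g) ≠ 1`. -/
theorem statement0 {F : Type*} [Field F] {G : Type*} [Group G] (hFG : Group.FG G)
    {n : ℕ} (g : G) (ρ : G →* Matrix.GeneralLinearGroup (Fin n) F)
    (hg : ρ g ≠ 1) :
    ∃ (n' : ℕ) (ρ' : G →* Matrix.GeneralLinearGroup (Fin n') F),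
      (∀ x : G, ((ρ' x : Matrix (Fin n') (Fin n') F) = 1 ∨
        ∃ σ : Equiv.Perm (Fin n'), (∀ i, σ i ≠ i) ∧
          (ρ' x : Matrix (Fin n') (Fin n') F) = permMatrix F σ)) ∧
      ρ' g ≠ 1 := by
  exact statement0_general F g ρ hg
end

section
/- Let F be a field, let r, s ∈ ℕ and n ≥ 1, and let L = F(z_{k,i,j} : 1 ≤ k ≤ r, 1 ≤ i,j ≤ n) be the field of rational functions over F in r·n² independent variables. For each 1 ≤ k ≤ r let A_k ∈ M_n(L) be the generic matrix (z_{k,i,j})_{1≤i,j≤n}. Let w be an element of the free unital associative F-algebra on the 2r + 2s generators b_1,…,b_r, b̄_1,…,b̄_r, c_1,…,c_s, c̄_1,…,c̄_s (where b̄_k and c̄_j are generators formally unrelated to b_k and c_j), and fix invertible matrices C_1,…,C_s ∈ M_n(F), viewed inside M_n(L). For invertible X_1,…,X_r ∈ M_n(L), let w(X_1,…,X_r,C_1,…,C_s) ∈ M_n(L) denote the image of w under the F-algebra homomorphism sending b_k ↦ X_k, b̄_k ↦ X_k^{-1}, c_j ↦ C_j, c̄_j ↦ C_j^{-1}. If there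 exist invertible matrices B_1,…,B_r ∈ M_n(L) such that w(B_1,…,B_r,C_1,…,C_s) is invertible, then w(A_1,…,A_r,C_1,…,C_s) is invertible. -/
open scoped Matrix

/-- The `k`-th generic `n × n` matrix: its `(i,j)` entry is the image in `L` of the
variable `z_{k,i,j}` of the polynomial ring `F[z_{k,i,j}]`. -/
noncomputable def genericMatrix (F : Type*) [CommRing F] (r n : ℕ) (L : Type*) [CommRing L]
    [Algebra (MvPolynomial (Fin r × Fin n × Fin n) F) L] (k : Fin r) :
    Matrix (Fin n) (Fin n) L :=
  Matrix.of fun i j => algebraMap (MvPolynomial (Fin r × Fin n × Fin n) F) L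
    (MvPolynomial.X (k, i, j))

/-- Substitution of matrices for the generators of the free unital associative `F`-algebra on
`2r + 2s` generators `b_1,…,b_r, b̄_1,…,b̄_r, c_1,…,c_s, c̄_1,…,c̄_s`: the `F`-algebra
homomorphism sends `b_k ↦ X k`, `b̄_k ↦ (X k)⁻¹`, `c_j ↦ Y j`, `c̄_j ↦ (Y j)⁻¹`. -/
noncomputable def substWord {F : Type*} [Field F] {r s n : ℕ} {L : Type*} [Field L]
    [Algebra F L] (X : Fin r → Matrix (Fin n) (Fin n) L)
    (Y : Fin s → Matrix (Fin n) (Fin n) L)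
    (w : FreeAlgebra F ((Fin r ⊕ Fin r) ⊕ (Fin s ⊕ Fin s))) :
    Matrix (Fin n) (Fin n) L :=
  FreeAlgebra.lift F
    (Sum.elim (Sum.elim X fun k => (X k)⁻¹) (Sum.elim Y fun j => (Y j)⁻¹)) w

/-!
The entries of `w(B, C)` need not be values at `B` of polynomials in the `z_{k,i,j}`, but they are
values of fractions whose denominators are products of the determinants of the generic matrices.
These determinants do not vanish at `B`, so the generic matrices are already invertible over the
subring of `F(z)` of fractions regular at `B`. Hence `w(A, C)` has entries in this subring and
specializes to `w(B, C)`, so its determinant specializes to a nonzero value and is itself nonzero.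
-/

section Specialization

variable {R K L : Type*} [CommRing R] [CommRing K] [Nontrivial K] [Field L]

theorem isUnit_map_of_injective_of_isUnit_map {f : R →+* L} (hf : Function.Injective f)
    (g : R →+* K) {a : R} (ha : IsUnit (g a)) : IsUnit (f a) := by
  have ha0 : a ≠ 0 := fun h ↦ ha.ne_zero (by rw [h, map_zero])
  exact ((map_ne_zero_iff f hf).2 ha0).isUnit

theorem isUnit_mapMatrix_of_injective_of_isUnit_mapMatrix {m : Type*} [Fintype m] [DecidableEq m]
    {f : R →+* L} (hf : Function.Injective f) (g : R →+* K) {A : Matrix m m R}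
    (hA : IsUnit (g.mapMatrix A)) : IsUnit (f.mapMatrix A) := by
  rw [Matrix.isUnit_iff_isUnit_det, ← RingHom.map_det] at hA ⊢
  exact isUnit_map_of_injective_of_isUnit_map hf g hA

end Specialization

section Fractions

variable {F R K : Type*} [CommRing F] [CommRing R] [CommRing K] [Algebra F R] [Algebra F K]

/-- The ring of fractions regular at the `K`-valued point `φ` of `R`: a denominator is allowed
if its value at `φ` is a unit. -/
abbrev RegularFractions (φ : R →ₐ[F] K) : Type _ :=
  Localization ((IsUnit.submonoid K).comap φ)

namespace RegularFractions

theorem isUnit_mapMatrix_algebraMap {m : Type*} [Fintype m] [DecidableEq m] (φ : R →ₐ[F] K)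
    {A : Matrix m m R} (hA : IsUnit (φ.mapMatrix A)) :
    IsUnit ((algebraMap R (RegularFractions φ)).mapMatrix A) := by
  rw [Matrix.isUnit_iff_isUnit_det, ← AlgHom.map_det] at hA
  rw [Matrix.isUnit_iff_isUnit_det, ← RingHom.map_det]
  exact IsLocalization.map_units (RegularFractions φ)
    (⟨A.det, hA⟩ : (IsUnit.submonoid K).comap φ)

/-- The value at the point `φ` of a fraction regular there. -/
noncomputable def eval (φ : R →ₐ[F] K) : RegularFractions φ →ₐ[F] K :=
  IsLocalization.liftAlgHom (M := (IsUnit.submonoid K).comap φ) (f := φ) fun b ↦ b.2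

@[simp]
theorem eval_algebraMap (φ : R →ₐ[F] K) (a : R) :
    eval φ (algebraMap R (RegularFractions φ) a) = φ a :=
  IsLocalization.lift_eq _ a

variable (L : Type*) [Nontrivial K] [Field L] [Algebra F L] [Algebra R L] [FaithfulSMul R L]
  [IsScalarTower F R L]

/-- Fractions regular at `φ`, as elements of a field `L` containing `R`. -/
noncomputable def toField (φ : R →ₐ[F] K) : RegularFractions φ →ₐ[F] L :=
  IsLocalization.liftAlgHom (M := (IsUnit.submonoid K).comap φ)
    (f := IsScalarTower.toAlgHom F R L) fun b ↦
      isUnit_map_of_injective_of_isUnit_map (FaithfulSMul.algebraMap_injective R L)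
        φ.toRingHom b.2

@[simp]
theorem toField_algebraMap (φ : R →ₐ[F] K) (a : R) :
    toField L φ (algebraMap R (RegularFractions φ) a) = algebraMap R L a :=
  IsLocalization.lift_eq _ a

theorem toField_injective (φ : R →ₐ[F] K) : Function.Injective (toField L φ) := by
  refine (IsLocalization.lift_injective_iff _).2 fun a b ↦ ⟨fun h ↦ ?_, fun h ↦ ?_⟩
  · simpa using congrArg (toField L φ) h
  · rw [FaithfulSMul.algebraMap_injective R L h]

end RegularFractions

end Fractions

section EvalWord

variable {F ι κ A E : Type*} [CommSemiring F] [Semiring A] [Algebra F A] [Semiring E] [Algebra F E]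

/-- Substitution of units `u`, `v` of an `F`-algebra for the generators `b`, `c` of the free
algebra and of their inverses for `b̄`, `c̄`. Taking units rather than elements makes it commute
with algebra homomorphisms. -/
noncomputable def evalWord (u : ι → Aˣ) (v : κ → Aˣ) :
    FreeAlgebra F ((ι ⊕ ι) ⊕ (κ ⊕ κ)) →ₐ[F] A :=
  FreeAlgebra.lift F (Sum.elim (Sum.elim (fun k ↦ ↑(u k)) fun k ↦ ↑(u k)⁻¹)
    (Sum.elim (fun j ↦ ↑(v j)) fun j ↦ ↑(v j)⁻¹))

theorem map_evalWord (f : A →ₐ[F] E) (u : ι → Aˣ) (v : κ → Aˣ)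
    (w : FreeAlgebra F ((ι ⊕ ι) ⊕ (κ ⊕ κ))) :
    f (evalWord u v w) =
      evalWord (fun k ↦ Units.map (f : A →* E) (u k)) (fun j ↦ Units.map (f : A →* E) (v j))
        w := by
  rw [← AlgHom.comp_apply]
  congr 1
  ext ((k | k) | (j | j)) <;> simp [evalWord]

end EvalWord

theorem substWord_eq_mapMatrix_evalWord {F S L : Type*} [Field F] [CommRing S] [Field L]
    [Algebra F S] [Algebra F L] {r s n : ℕ} (f : S →ₐ[F] L)
    {X : Fin r → Matrix (Fin n) (Fin n) L} {Y : Fin s → Matrix (Fin n) (Fin n) L}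
    {u : Fin r → GL (Fin n) S} {v : Fin s → GL (Fin n) S}
    (hX : ∀ k, f.mapMatrix (u k) = X k) (hY : ∀ j, f.mapMatrix (v j) = Y j)
    (w : FreeAlgebra F ((Fin r ⊕ Fin r) ⊕ (Fin s ⊕ Fin s))) :
    substWord X Y w = f.mapMatrix (evalWord u v w) := by
  obtain rfl := funext hX
  obtain rfl := funext hY
  rw [map_evalWord]
  simp only [evalWord, substWord, Matrix.coe_units_inv, Units.coe_map, MonoidHom.coe_coe]

theorem statement2_general {F : Type*} [Field F] (r s n : ℕ)
    (K : Type*) [Field K] [Algebra F K]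
    (L : Type*) [Field L] [Algebra (MvPolynomial (Fin r × Fin n × Fin n) F) L]
    [FaithfulSMul (MvPolynomial (Fin r × Fin n × Fin n) F) L]
    [Algebra F L] [IsScalarTower F (MvPolynomial (Fin r × Fin n × Fin n) F) L]
    (w : FreeAlgebra F ((Fin r ⊕ Fin r) ⊕ (Fin s ⊕ Fin s)))
    (C : Fin s → Matrix (Fin n) (Fin n) F) (hC : ∀ j, IsUnit (C j))
    (B : Fin r → Matrix (Fin n) (Fin n) K) (hB : ∀ k, IsUnit (B k))
    (hw : IsUnit (substWord B (fun j => (C j).map (algebraMap F K)) w)) :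
    IsUnit (substWord (genericMatrix F r n L) (fun j => (C j).map (algebraMap F L)) w) := by
  let φ : MvPolynomial (Fin r × Fin n × Fin n) F →ₐ[F] K :=
    MvPolynomial.aeval fun p ↦ B p.1 p.2.1 p.2.2
  let Z := genericMatrix F r n (MvPolynomial (Fin r × Fin n × Fin n) F)
  have hZ : ∀ k, φ.mapMatrix (Z k) = B k := fun k ↦ by
    ext i j
    simp [φ, Z, genericMatrix]
  choose u hu using fun k ↦
    RegularFractions.isUnit_mapMatrix_algebraMap φ ((hZ k).symm ▸ hB k)
  choose v hv using fun j ↦ (hC j).map (algebraMap F (RegularFractions φ)).mapMatrix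
  have hvalue := substWord_eq_mapMatrix_evalWord (RegularFractions.eval φ) (X := B)
    (Y := fun j ↦ (C j).map (algebraMap F K)) (u := u) (v := v)
    (fun k ↦ by rw [← hZ]; ext; simp [hu]) (fun j ↦ by ext; simp [hv]) w
  have hgeneric := substWord_eq_mapMatrix_evalWord (RegularFractions.toField L φ)
    (X := genericMatrix F r n L) (Y := fun j ↦ (C j).map (algebraMap F L)) (u := u) (v := v)
    (fun k ↦ by ext; simp [hu, Z, genericMatrix]) (fun j ↦ by ext; simp [hv]) w
  rw [hvalue] at hw
  rw [hgeneric]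
  exact isUnit_mapMatrix_of_injective_of_isUnit_mapMatrix
    (f := (RegularFractions.toField L φ).toRingHom) (RegularFractions.toField_injective L φ)
    (RegularFractions.eval φ).toRingHom hw

/-- Let `L = F(z_{k,i,j})` be the field of rational functions over `F` in
`r·n²` variables, `A_k` the generic matrices, and `C_1,…,C_s` invertible matrices over `F`,
viewed in `M_n(L)`. If some word `w` in the free algebra evaluates to an invertible matrix
when invertible matrices `B_1,…,B_r ∈ M_n(L)` are substituted for `b_1,…,b_r` (and their
inverses for `b̄_1,…,b̄_r`, and the `C_j`, `C_j⁻¹` for `c_j`, `c̄_j`), then it also evaluates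
to an invertible matrix when the generic matrices `A_k` are substituted. -/
theorem statement2 {F : Type*} [Field F] (r s n : ℕ) (hn : 1 ≤ n)
    (L : Type*) [Field L] [Algebra (MvPolynomial (Fin r × Fin n × Fin n) F) L]
    [IsFractionRing (MvPolynomial (Fin r × Fin n × Fin n) F) L]
    [Algebra F L] [IsScalarTower F (MvPolynomial (Fin r × Fin n × Fin n) F) L]
    (w : FreeAlgebra F ((Fin r ⊕ Fin r) ⊕ (Fin s ⊕ Fin s)))
    (C : Fin s → Matrix (Fin n) (Fin n) F) (hC : ∀ j, IsUnit (C j))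
    (B : Fin r → Matrix (Fin n) (Fin n) L) (hB : ∀ k, IsUnit (B k))
    (hw : IsUnit (substWord B (fun j => (C j).map (algebraMap F L)) w)) :
    IsUnit (substWord (genericMatrix F r n L) (fun j => (C j).map (algebraMap F L)) w) :=
  statement2_general r s n L L w C hC B hB hw
end

section
/- Let F be a field, let c ≥ 1, let A ∈ M_c(F), and let δ ≥ 0 be a real number. Then rank(A) ≥ c·(1 − δ) if and only if there exists an invertible matrix D ∈ M_c(F) such that rank(I_c − D·A) ≤ c·δ. -/
/-!
For every `D`, writing `1 = (1 - D * A) + D * A` and using subadditivity of the rank gives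
`c ≤ rank (1 - D * A) + rank A`. Equality is attained by an invertible `D`: the rank normal form
of `A` provides one for which `D * A` is idempotent, and then `1 - D * A` and `D * A` are
complementary projections. So the least value of `rank (1 - D * A)` over invertible `D` is
`c - rank A`.
-/

/-- When `u` is invertible, `u * v * a` is the conjugate `u * (v * a * u) * u⁻¹`. -/
theorem isIdempotentElem_mul_mul_of_isRightRegular {S : Type*} [Semigroup S] {u v a : S}
    (hu : IsRightRegular u) (h : IsIdempotentElem (v * a * u)) :
    IsIdempotentElem (u * v * a) := by
  apply hu
  calc u * v * a * (u * v * a) * u = u * (v * a * u * (v * a * u)) := by simp only [mul_assoc]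
    _ = u * (v * a * u) := by rw [h.eq]
    _ = u * v * a * u := by simp only [mul_assoc]

section Rank

variable {F m n : Type*} [Field F] [Fintype n]

theorem matrix_rank_add_le (A B : Matrix m n F) : (A + B).rank ≤ A.rank + B.rank := by
  have range_le : (A + B).mulVecLin.range ≤ A.mulVecLin.range ⊔ B.mulVecLin.range := by
    rw [Matrix.mulVecLin_add]
    exact LinearMap.range_add_le _ _
  exact (Submodule.finrank_mono range_le).trans
    (Submodule.finrank_add_le_finrank_add_finrank _ _)

variable [DecidableEq n]

theorem card_le_rank_one_sub_add_rank (B : Matrix n n F) :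
    Fintype.card n ≤ (1 - B).rank + B.rank := by
  have rank_le := matrix_rank_add_le (1 - B) B
  rwa [sub_add_cancel, Matrix.rank_one] at rank_le

theorem rank_one_sub_add_rank_of_isIdempotentElem {E : Matrix n n F} (hE : IsIdempotentElem E) :
    (1 - E).rank + E.rank = Fintype.card n :=
  (Matrix.rank_add_rank_le_card_of_mul_eq_zero hE.one_sub_mul_self).antisymm
    (card_le_rank_one_sub_add_rank E)

theorem exists_isUnit_isIdempotentElem_mul (A : Matrix n n F) :
    ∃ D : Matrix n n F, IsUnit D ∧ IsIdempotentElem (D * A) := by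
  obtain ⟨V, U, e, hV, hU, hVAU⟩ := Matrix.exists_rank_normal_form A
  have idem : IsIdempotentElem (V * A * U) := by
    rw [IsIdempotentElem, hVAU, Matrix.submatrix_mul_equiv, Matrix.fromBlocks_multiply]
    simp
  exact ⟨U * V, hU.mul hV, isIdempotentElem_mul_mul_of_isRightRegular hU.isRegular.right idem⟩

theorem exists_isUnit_rank_one_sub_mul_add_rank_eq_card (A : Matrix n n F) :
    ∃ D : Matrix n n F, IsUnit D ∧ (1 - D * A).rank + A.rank = Fintype.card n := by
  obtain ⟨D, hD, idem⟩ := exists_isUnit_isIdempotentElem_mul A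
  have rank_mul : (D * A).rank = A.rank :=
    Matrix.rank_mul_eq_right_of_isUnit_det D A ((Matrix.isUnit_iff_isUnit_det D).1 hD)
  exact ⟨D, hD, rank_mul ▸ rank_one_sub_add_rank_of_isIdempotentElem idem⟩

theorem statement4_general {K : Type*} [Ring K] [PartialOrder K] [IsOrderedRing K]
    (A : Matrix n n F) (δ : K) :
    (Fintype.card n : K) * (1 - δ) ≤ (A.rank : K) ↔
      ∃ D : Matrix n n F, IsUnit D ∧
        ((1 - D * A).rank : K) ≤ (Fintype.card n : K) * δ := by
  rw [mul_sub, mul_one, sub_le_iff_le_add']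
  constructor
  · intro h
    obtain ⟨D, hD, rank_eq⟩ := exists_isUnit_rank_one_sub_mul_add_rank_eq_card A
    refine ⟨D, hD, le_of_add_le_add_right (a := (A.rank : K)) ?_⟩
    rwa [← Nat.cast_add, rank_eq]
  · rintro ⟨D, -, hDA⟩
    have card_le : Fintype.card n ≤ (1 - D * A).rank + A.rank :=
      (card_le_rank_one_sub_add_rank (D * A)).trans
        (Nat.add_le_add_left (Matrix.rank_mul_le_right D A) _)
    calc (Fintype.card n : K) ≤ (1 - D * A).rank + A.rank :=
        (Nat.mono_cast card_le).trans_eq (Nat.cast_add _ _)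
      _ ≤ Fintype.card n * δ + A.rank := by gcongr

end Rank

/-- Let `F` be a field, `c ≥ 1`, `A ∈ M_c(F)`, and `δ ≥ 0` a real number.
Then `rank(A) ≥ c·(1 − δ)` if and only if there exists an invertible matrix `D ∈ M_c(F)`
such that `rank(I_c − D·A) ≤ c·δ`. -/
theorem statement4 {F : Type*} [Field F] {c : ℕ} (hc : 1 ≤ c)
    (A : Matrix (Fin c) (Fin c) F) (δ : ℝ) (hδ : 0 ≤ δ) :
    (c : ℝ) * (1 - δ) ≤ (A.rank : ℝ) ↔
      ∃ D : Matrix (Fin c) (Fin c) F, IsUnit D ∧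
        (((1 - D * A : Matrix (Fin c) (Fin c) F).rank : ℝ) ≤ (c : ℝ) * δ) := by
  simpa only [Fintype.card_fin] using statement4_general A δ
end

section
/- Let F be a field, let V and W be F-vector spaces of the same finite dimension c ≥ 1, let T : V → W be a linear map, and let δ ≥ 0 be a real number. Then rank(T) ≥ c·(1 − δ) if and only if there exists an invertible (bijective) linear map S : W → V such that rank(id_V − S∘T) ≤ c·δ. -/
/-!
For every `S`, the range of `id - S ∘ T` contains `ker T`, with equality exactly when
`T ∘ S ∘ T = T`. So, if some invertible `S` satisfies this identity, the minimum of
`rank (id - S ∘ T)` over invertible `S` is `dim (ker T) = dim V - rank T`. When `V` and `W` have the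
same finite dimension, `ker T` and `coker T` are isomorphic, and such an `S` is obtained by
inverting `T` from a complement of `ker T` onto `range T` and mapping a complement of `range T`
isomorphically onto `ker T`.
-/

open Module

section Ring

variable {R V W : Type*} [Ring R] [AddCommGroup V] [Module R V] [AddCommGroup W] [Module R W]

theorem ker_le_range_id_sub_comp (T : V →ₗ[R] W) (S : W →ₗ[R] V) :
    T.ker ≤ (LinearMap.id - S ∘ₗ T).range := by
  intro x (hx : T x = 0)
  exact ⟨x, by simp [hx]⟩

theorem range_id_sub_comp_eq_ker_iff {T : V →ₗ[R] W} {S : W →ₗ[R] V} :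
    (LinearMap.id - S ∘ₗ T).range = T.ker ↔ T ∘ₗ S ∘ₗ T = T := by
  rw [← (ker_le_range_id_sub_comp T S).ge_iff_eq', LinearMap.range_le_ker_iff,
    LinearMap.comp_sub, LinearMap.comp_id, sub_eq_zero, eq_comm]

theorem exists_linearEquiv_comp_comp_eq_self {T : V →ₗ[R] W}
    (hker : IsComplemented T.ker) (hrange : IsComplemented T.range)
    (e : T.ker ≃ₗ[R] W ⧸ T.range) :
    ∃ S : W ≃ₗ[R] V, T ∘ₗ S.toLinearMap ∘ₗ T = T := by
  obtain ⟨C, hC⟩ := hker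
  obtain ⟨D, hD⟩ := hrange
  let rangeEquiv : T.range ≃ₗ[R] C :=
    T.quotKerEquivRange.symm ≪≫ₗ Submodule.quotientEquivOfIsCompl T.ker C hC
  let complEquiv : D ≃ₗ[R] T.ker :=
    (Submodule.quotientEquivOfIsCompl T.range D hD).symm ≪≫ₗ e.symm
  let S : W ≃ₗ[R] V := (Submodule.prodEquivOfIsCompl T.range D hD).symm ≪≫ₗ
    rangeEquiv.prodCongr complEquiv ≪≫ₗ Submodule.prodEquivOfIsCompl C T.ker hC.symm
  have apply_rangeEquiv (y : T.range) : T (rangeEquiv y) = y := by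
    obtain ⟨q, rfl⟩ := T.quotKerEquivRange.surjective y
    obtain ⟨c, rfl⟩ := (Submodule.quotientEquivOfIsCompl T.ker C hC).symm.surjective q
    simp [rangeEquiv]
  have S_apply (y : T.range) : S y = rangeEquiv y := by
    simp [S]
  refine ⟨S, LinearMap.ext fun x ↦ ?_⟩
  simpa [← S_apply] using apply_rangeEquiv ⟨T x, x, rfl⟩

end Ring

section DivisionRing

variable {K V W : Type*} [DivisionRing K] [AddCommGroup V] [Module K V] [AddCommGroup W]
  [Module K W] [FiniteDimensional K V] [FiniteDimensional K W]

theorem finrank_ker_eq_finrank_quotient_range (h : finrank K V = finrank K W) (T : V →ₗ[K] W) :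
    finrank K T.ker = finrank K (W ⧸ T.range) := by
  have := T.finrank_range_add_finrank_ker
  have := T.range.finrank_quotient_add_finrank
  lia

theorem exists_linearEquiv_range_id_sub_comp_eq_ker (h : finrank K V = finrank K W)
    (T : V →ₗ[K] W) :
    ∃ S : W ≃ₗ[K] V, (LinearMap.id - S.toLinearMap ∘ₗ T).range = T.ker := by
  simp only [range_id_sub_comp_eq_ker_iff]
  exact exists_linearEquiv_comp_comp_eq_self (Submodule.exists_isCompl T.ker)
    (Submodule.exists_isCompl T.range)
    (.ofFinrankEq _ _ (finrank_ker_eq_finrank_quotient_range h T))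

theorem isLeast_finrank_range_id_sub_comp (h : finrank K V = finrank K W) (T : V →ₗ[K] W) :
    IsLeast (Set.range fun S : W ≃ₗ[K] V ↦ finrank K (LinearMap.id - S.toLinearMap ∘ₗ T).range)
      (finrank K T.ker) := by
  constructor
  · obtain ⟨S, hS⟩ := exists_linearEquiv_range_id_sub_comp_eq_ker h T
    exact ⟨S, (LinearEquiv.ofEq _ _ hS).finrank_eq⟩
  · rintro _ ⟨S, rfl⟩
    exact Submodule.finrank_mono (ker_le_range_id_sub_comp T S)

end DivisionRing

theorem statement5_general {K V W : Type*} [DivisionRing K] [AddCommGroup V] [Module K V]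
    [AddCommGroup W] [Module K W] [FiniteDimensional K V] [FiniteDimensional K W]
    (h : finrank K V = finrank K W) (T : V →ₗ[K] W) (δ : ℝ) :
    (finrank K V : ℝ) * (1 - δ) ≤ finrank K T.range ↔
      ∃ S : W ≃ₗ[K] V,
        (finrank K (LinearMap.id - S.toLinearMap ∘ₗ T).range : ℝ) ≤ finrank K V * δ := by
  have rank_nullity : (finrank K T.range : ℝ) + finrank K T.ker = finrank K V := mod_cast
    T.finrank_range_add_finrank_ker
  obtain ⟨⟨S₀, hS₀⟩, hmin⟩ := isLeast_finrank_range_id_sub_comp h T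
  calc
    _ ↔ (finrank K T.ker : ℝ) ≤ finrank K V * δ := by constructor <;> intro <;> linarith
    _ ↔ _ := ⟨fun hδ ↦ ⟨S₀, (congrArg Nat.cast hS₀).trans_le hδ⟩,
      fun ⟨S, hS⟩ ↦ (Nat.cast_le.mpr (hmin ⟨S, rfl⟩)).trans hS⟩

/-- Let `V` and `W` be `F`-vector spaces of the same finite dimension
`c ≥ 1`, let `T : V → W` be linear and `δ ≥ 0`. Then `rank(T) ≥ c·(1 − δ)` if and only if
there exists an invertible (bijective) linear map `S : W → V` such that
`rank(id_V − S∘T) ≤ c·δ`. -/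
theorem statement5 {F : Type*} [Field F] {V W : Type*}
    [AddCommGroup V] [Module F V] [AddCommGroup W] [Module F W]
    [FiniteDimensional F V] [FiniteDimensional F W]
    {c : ℕ} (hc : 1 ≤ c) (hV : Module.finrank F V = c) (hW : Module.finrank F W = c)
    (T : V →ₗ[F] W) (δ : ℝ) (hδ : 0 ≤ δ) :
    (c : ℝ) * (1 - δ) ≤ (Module.finrank F ↥(LinearMap.range T) : ℝ) ↔
      ∃ S : W ≃ₗ[F] V,
        (Module.finrank F
            ↥(LinearMap.range (LinearMap.id - S.toLinearMap ∘ₗ T)) : ℝ) ≤ (c : ℝ) * δ := by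
  subst hV
  exact statement5_general hW.symm T δ
end

section
/- Let G be a group, T a set, and let g ∈ G and t ∈ T. Then the element g·t·g·t^{-1} of the free product G ∗ F_T is sufficiently generic. -/
/-- An element `x` of the free product `G ∗ F_T` (of a group `G` with the free group on a
set `T`) is *sufficiently generic* if for every field `L` containing `ℂ`, every `n ≥ 1` and
every group homomorphism `ρ : G ∗ F_T → GL_n(L)` such that (a) each `ρ(h)`, for `h ∈ G`, is
the identity matrix or the permutation matrix of a derangement, and (b) the family of all
entries of the matrices `ρ(t')`, `t' ∈ T`, is algebraically independent over `ℂ`, the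
matrix `ρ(x) − I_n` is invertible or zero. -/
def SufficientlyGeneric (G : Type*) [Group G] (T : Type*)
    (x : Monoid.Coprod G (FreeGroup T)) : Prop :=
  ∀ (L : Type*) [Field L] [Algebra ℂ L] (n : ℕ), 1 ≤ n →
    ∀ ρ : Monoid.Coprod G (FreeGroup T) →* Matrix.GeneralLinearGroup (Fin n) L,
      (∀ h : G, ((ρ (Monoid.Coprod.inl h) : Matrix (Fin n) (Fin n) L) = 1 ∨
        ∃ σ : Equiv.Perm (Fin n), (∀ i, σ i ≠ i) ∧
          (ρ (Monoid.Coprod.inl h) : Matrix (Fin n) (Fin n) L) = permMatrix L σ)) →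
      AlgebraicIndependent ℂ
        (fun p : T × Fin n × Fin n =>
          (ρ (Monoid.Coprod.inr (FreeGroup.of p.1)) : Matrix (Fin n) (Fin n) L) p.2.1 p.2.2) →
      (IsUnit ((ρ x : Matrix (Fin n) (Fin n) L) - 1) ∨
        ((ρ x : Matrix (Fin n) (Fin n) L) - 1 = 0))

/-!
If `ρ g = 1`, then `ρ (g t g t⁻¹) = 1`. Otherwise `P = ρ g` is the permutation matrix of a
derangement `σ`, and for `A = ρ t` we have `P * A * P * A⁻¹ - 1 = (P * A * P - A) * A⁻¹`. As the
entries of `A` are algebraically independent, `det (P * A * P - A)` is nonzero as soon as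
`det (P * B * P - B)` is nonzero for a single matrix `B`, which may have entries in any extension
of the base ring. Since `σ` is conjugate to `σ⁻¹`, there is a permutation `τ` with `σ * τ * σ = τ`.
Let `Q` be its permutation matrix and `D` the diagonal matrix of indeterminates `X i`. For
`B = D * Q`, the difference `P * B * P - B` is the product of `Q` with the diagonal matrix with
entries `X (σ i) - X i`, none of which vanishes because `σ` has no fixed point.
-/

theorem permMatrix_eq_permMatrix_inv {n : ℕ} (R : Type*) [Zero R] [One R]
    (σ : Equiv.Perm (Fin n)) : permMatrix R σ = σ⁻¹.permMatrix R := by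
  ext i j
  simp [permMatrix, PEquiv.toMatrix_apply, Equiv.symm_apply_eq]

theorem exists_perm_mul_mul_eq_self {ι : Type*} [Finite ι] (σ : Equiv.Perm ι) :
    ∃ τ : Equiv.Perm ι, σ * τ * σ = τ := by
  classical
  have := Fintype.ofFinite ι
  have hconj : IsConj σ σ⁻¹ := by
    rw [Equiv.Perm.isConj_iff_cycleType_eq, Equiv.Perm.cycleType_inv]
  obtain ⟨τ, hτ⟩ := isConj_iff.1 hconj
  exact ⟨τ, by rw [mul_assoc, mul_inv_eq_iff_eq_mul.1 hτ, mul_inv_cancel_left]⟩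

theorem aeval_ne_zero_of_algebraicIndependent {K L S ι : Type*} [CommRing K] [CommRing L]
    [Algebra K L] [CommSemiring S] [Algebra K S] {x : ι → L} (hx : AlgebraicIndependent K x)
    {y : ι → S} {p : MvPolynomial ι K} (hp : MvPolynomial.aeval y p ≠ 0) :
    MvPolynomial.aeval x p ≠ 0 := by
  rw [map_ne_zero_iff _ hx]
  rintro rfl
  exact hp (map_zero _)

theorem isUnit_mul_inv_sub_one_iff {R : Type*} [Ring R] {a : R} {v : Rˣ} :
    IsUnit (a * ↑v⁻¹ - 1) ↔ IsUnit (a - v) := by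
  rw [← Units.isUnit_mul_units _ v, sub_mul, Units.inv_mul_cancel_right, one_mul]

theorem map_permMatrix {ι R S F : Type*} [DecidableEq ι] [MulZeroOneClass R]
    [MulZeroOneClass S] [FunLike F R S] [MonoidWithZeroHomClass F R S] (f : F) (σ : Equiv.Perm ι) :
    (σ.permMatrix R).map f = σ.permMatrix S := by
  ext i j
  simp [PEquiv.toMatrix_apply, apply_ite f]

section Matrix

variable {ι : Type*} [Fintype ι] [DecidableEq ι]

theorem permMatrix_mul_diagonal {R : Type*} [NonAssocSemiring R] (σ : Equiv.Perm ι) (d : ι → R) :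
    σ.permMatrix R * Matrix.diagonal d = Matrix.diagonal (d ∘ σ) * σ.permMatrix R := by
  ext i j
  by_cases h : σ i = j <;> simp [PEquiv.toMatrix_apply, h]

theorem det_permMatrix_mul_mul_permMatrix_sub {R : Type*} [CommRing R] {σ τ : Equiv.Perm ι}
    (hστ : σ * τ * σ = τ) (d : ι → R) :
    (σ.permMatrix R * (Matrix.diagonal d * τ.permMatrix R) * σ.permMatrix R
      - Matrix.diagonal d * τ.permMatrix R).det = (∏ i, (d (σ i) - d i)) * Equiv.Perm.sign τ := by
  have hperm : σ.permMatrix R * τ.permMatrix R * σ.permMatrix R = τ.permMatrix R := by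
    rw [← Matrix.permMatrix_mul, ← Matrix.permMatrix_mul, ← mul_assoc, hστ]
  have hfactor : σ.permMatrix R * (Matrix.diagonal d * τ.permMatrix R) * σ.permMatrix R
      - Matrix.diagonal d * τ.permMatrix R
      = Matrix.diagonal (fun i => d (σ i) - d i) * τ.permMatrix R := by
    calc
      _ = Matrix.diagonal (d ∘ σ) * (σ.permMatrix R * τ.permMatrix R * σ.permMatrix R)
          - Matrix.diagonal d * τ.permMatrix R := by
        rw [← mul_assoc (σ.permMatrix R), permMatrix_mul_diagonal]
        simp only [mul_assoc]
      _ = _ := by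
        rw [hperm, ← sub_mul, Matrix.diagonal_sub]
        rfl
  rw [hfactor, Matrix.det_mul, Matrix.det_diagonal, Matrix.det_permutation]

theorem exists_det_permMatrix_mul_mul_permMatrix_sub_ne_zero (K : Type*) [CommRing K] [IsDomain K]
    {σ : Equiv.Perm ι} (hσ : ∀ i, σ i ≠ i) :
    ∃ B : Matrix ι ι (MvPolynomial ι K),
      (σ.permMatrix _ * B * σ.permMatrix _ - B).det ≠ 0 := by
  obtain ⟨τ, hτ⟩ := exists_perm_mul_mul_eq_self σ
  refine ⟨Matrix.diagonal MvPolynomial.X * τ.permMatrix _, ?_⟩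
  have hsign : ((Equiv.Perm.sign τ : ℤ) : MvPolynomial ι K) ≠ 0 :=
    ((Equiv.Perm.sign τ).isUnit.map (Int.castRingHom (MvPolynomial ι K))).ne_zero
  rw [det_permMatrix_mul_mul_permMatrix_sub hτ]
  refine mul_ne_zero (Finset.prod_ne_zero_iff.2 fun i _ => ?_) hsign
  exact sub_ne_zero.2 fun h => hσ i (MvPolynomial.X_injective h)

theorem aeval_det_mul_mvPolynomialX_mul_sub {K S : Type*} [CommRing K] [CommRing S] [Algebra K S]
    (P Q : Matrix ι ι K) (B : Matrix ι ι S) :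
    MvPolynomial.aeval (fun p : ι × ι => B p.1 p.2)
        (P.map MvPolynomial.C * Matrix.mvPolynomialX ι ι K * Q.map MvPolynomial.C
          - Matrix.mvPolynomialX ι ι K).det =
      (P.map (algebraMap K S) * B * Q.map (algebraMap K S) - B).det := by
  have aeval_C (M : Matrix ι ι K) :
      (MvPolynomial.aeval fun p : ι × ι => B p.1 p.2).mapMatrix (M.map MvPolynomial.C) =
        M.map (algebraMap K S) := by
    ext i j
    simp
  rw [AlgHom.map_det, map_sub, map_mul, map_mul, aeval_C, aeval_C,
    Matrix.mvPolynomialX_mapMatrix_aeval]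

section Generic

variable {K L : Type*} [CommRing K] [CommRing L] [Algebra K L] {A : Matrix ι ι L}

theorem det_mul_mul_sub_ne_zero_of_algebraicIndependent {S : Type*} [CommRing S] [Algebra K S]
    (hA : AlgebraicIndependent K fun p : ι × ι => A p.1 p.2) {P Q : Matrix ι ι K}
    {B : Matrix ι ι S}
    (hB : (P.map (algebraMap K S) * B * Q.map (algebraMap K S) - B).det ≠ 0) :
    (P.map (algebraMap K L) * A * Q.map (algebraMap K L) - A).det ≠ 0 := by
  rw [← aeval_det_mul_mvPolynomialX_mul_sub] at hB ⊢
  exact aeval_ne_zero_of_algebraicIndependent hA hB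

theorem det_permMatrix_mul_mul_permMatrix_sub_ne_zero [IsDomain K]
    (hA : AlgebraicIndependent K fun p : ι × ι => A p.1 p.2) {σ : Equiv.Perm ι}
    (hσ : ∀ i, σ i ≠ i) : (σ.permMatrix L * A * σ.permMatrix L - A).det ≠ 0 := by
  obtain ⟨B, hB⟩ := exists_det_permMatrix_mul_mul_permMatrix_sub_ne_zero K hσ
  rw [← map_permMatrix (algebraMap K _)] at hB ⊢
  exact det_mul_mul_sub_ne_zero_of_algebraicIndependent hA hB

end Generic

end Matrix

theorem statement8_general {K L G T : Type*} [CommRing K] [Field L] [Algebra K L] [Group G]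
    (g : G) (t : T) {n : ℕ}
    (ρ : Monoid.Coprod G (FreeGroup T) →* Matrix.GeneralLinearGroup (Fin n) L)
    (hg : (ρ (Monoid.Coprod.inl g) : Matrix (Fin n) (Fin n) L) = 1 ∨
      ∃ σ : Equiv.Perm (Fin n), (∀ i, σ i ≠ i) ∧
        (ρ (Monoid.Coprod.inl g) : Matrix (Fin n) (Fin n) L) = permMatrix L σ)
    (ht : AlgebraicIndependent K fun p : Fin n × Fin n =>
      (ρ (Monoid.Coprod.inr (FreeGroup.of t)) : Matrix (Fin n) (Fin n) L) p.1 p.2) :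
    let x := Monoid.Coprod.inl g * Monoid.Coprod.inr (FreeGroup.of t) *
      Monoid.Coprod.inl g * (Monoid.Coprod.inr (FreeGroup.of t))⁻¹
    IsUnit ((ρ x : Matrix (Fin n) (Fin n) L) - 1) ∨ (ρ x : Matrix (Fin n) (Fin n) L) - 1 = 0 := by
  have : IsDomain K := ht.algebraMap_injective.isDomain (algebraMap K L)
  simp only [map_mul, map_inv]
  rcases hg with hone | ⟨σ, hσ, hperm⟩
  · right
    simp [Units.val_eq_one.1 hone]
  · left
    have hσ_inv : ∀ i, σ⁻¹ i ≠ i := fun i hi => hσ i (Equiv.Perm.inv_eq_iff_eq.1 hi).symm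
    simp only [Units.val_mul]
    rw [isUnit_mul_inv_sub_one_iff, hperm, permMatrix_eq_permMatrix_inv,
      Matrix.isUnit_iff_isUnit_det, isUnit_iff_ne_zero]
    exact det_permMatrix_mul_mul_permMatrix_sub_ne_zero ht hσ_inv

/-- The element `g·t·g·t⁻¹` of the free product `G ∗ F_T` is sufficiently
generic. -/
theorem statement8 {G : Type*} [Group G] {T : Type*} (g : G) (t : T) :
    SufficientlyGeneric G T
      (Monoid.Coprod.inl g * Monoid.Coprod.inr (FreeGroup.of t) *
        Monoid.Coprod.inl g * (Monoid.Coprod.inr (FreeGroup.of t))⁻¹) := fun _ _ _ _ _ ρ hρ hT =>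
  statement8_general g t ρ (hρ g) (hT.comp (fun p => (t, p)) (Prod.mk_right_injective t))
end

section
/- Let M be a simple matroid with rank function r on a finite ground set E, let F be a field, let c ≥ 1, let V be a finite-dimensional F-vector space, let {W_e}_{e∈E} be F-vector spaces with dim W_e = c for every e, and let T_e : V → W_e be linear maps. For S ⊆ E let T_S : V → ⊕_{e∈S} W_e denote the joint map v ↦ (T_e v)_{e∈S}. Then the following are equivalent: (i) for every independent set A ⊆ E, rank(T_A) = c·|A|, and for every circuit C of M and every x ∈ C there exists a linear map S : ⊕_{e∈C∖{x}} W_e → W_x with T_x = S ∘ T_{C∖{x}}; (ii) rank(T_S) = c·r(S) for every S ⊆ E. -/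
/-!
The rank of `T_S` is the codimension of its kernel, and `T_x` factors through `T_S` exactly when
`ker T_S ≤ ker T_x`, so both conditions speak only about the kernels of the joint maps.

If `T_x` factors through `T_{C∖{x}}` for all `x` in all circuits `C`, then `ker T_S = ker T_I` for a
basis `I` of `S`: every `e ∈ S ∖ I` lies on a circuit contained in `I ∪ {e}`. Hence
`rank T_S = rank T_I = c·|I| = c·r(S)`. Conversely, removing an element `x` from a circuit `C` does
not change its rank, so `T_C` and `T_{C∖{x}}` have equal rank and nested kernels, which
must then coincide.
-/

/-- The joint map `T_S : V → ⊕_{e∈S} W_e`, `v ↦ (T_e v)_{e∈S}`. -/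
def jointMap {F : Type*} [Field F] {α : Type*} {V : Type*} [AddCommGroup V] [Module F V]
    {W : α → Type*} [∀ e, AddCommGroup (W e)] [∀ e, Module F (W e)]
    (T : ∀ e, V →ₗ[F] W e) (S : Finset α) : V →ₗ[F] ((e : ↥S) → W e.1) :=
  LinearMap.pi fun e => T e.1

section LinearMaps

open LinearMap Module

variable {R V U W : Type*} [AddCommGroup V] [AddCommGroup U] [AddCommGroup W]

theorem exists_eq_comp_iff_ker_le_ker [Ring R] [Module R V] [Module R U] [Module R W]
    [IsSemisimpleModule R U] {f : V →ₗ[R] U} {g : V →ₗ[R] W} :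
    (∃ s : U →ₗ[R] W, g = s ∘ₗ f) ↔ ker f ≤ ker g := by
  refine ⟨fun ⟨s, hs⟩ ↦ hs ▸ ker_le_ker_comp f s, fun h ↦ ?_⟩
  have hinj : Function.Injective ((ker f).liftQ f le_rfl) :=
    ker_eq_bot.1 (Submodule.ker_liftQ_eq_bot _ _ _ le_rfl)
  obtain ⟨s, hs⟩ := IsSemisimpleModule.extension_property _ hinj ((ker f).liftQ g h)
  exact ⟨s, ext fun v ↦ (LinearMap.congr_fun hs ((ker f).mkQ v)).symm⟩

theorem finrank_range_eq_of_ker_eq [Ring R] [Module R V] [Module R U] [Module R W]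
    {f : V →ₗ[R] U} {g : V →ₗ[R] W} (h : ker f = ker g) :
    finrank R (range f) = finrank R (range g) :=
  (f.quotKerEquivRange.symm ≪≫ₗ Submodule.quotEquivOfEq _ _ h ≪≫ₗ g.quotKerEquivRange).finrank_eq

theorem ker_eq_of_ker_le_of_finrank_range_eq [DivisionRing R] [Module R V] [Module R U]
    [Module R W] {f : V →ₗ[R] U} {g : V →ₗ[R] W} [FiniteDimensional R (range f)]
    (hle : ker f ≤ ker g) (hrank : finrank R (range f) = finrank R (range g)) :
    ker f = ker g := by
  have := Module.Finite.equiv f.quotKerEquivRange.symm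
  have := Module.Finite.of_surjective _ (Submodule.factor_surjective hle)
  have hquot : finrank R (V ⧸ ker f) = finrank R (V ⧸ ker g) := by
    rw [f.quotKerEquivRange.finrank_eq, g.quotKerEquivRange.finrank_eq, hrank]
  have hinj : Function.Injective (Submodule.factor hle) :=
    (injective_iff_surjective_of_finrank_eq_finrank hquot).2 (Submodule.factor_surjective hle)
  refine hle.antisymm fun v hv ↦ (Submodule.Quotient.mk_eq_zero _).1 (hinj ?_)
  rw [map_zero]
  exact (Submodule.Quotient.mk_eq_zero _).2 hv

end LinearMaps

section RankFunction

open Finset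

variable {α : Type*} {r : Finset α → ℕ}

/-- A set `A` is independent for the rank function `r` if `r(A) = |A|`. -/
def IsIndep (r : Finset α → ℕ) (A : Finset α) : Prop :=
  r A = #A

/-- A circuit of the rank function `r` is a minimal dependent set. -/
def IsCircuit (r : Finset α → ℕ) (C : Finset α) : Prop :=
  Minimal (fun D ↦ ¬ IsIndep r D) C

variable [DecidableEq α]

/-- Matroids are encoded by their rank functions on finite sets: the rank is bounded by the
cardinality, monotone and submodular. The ground set, which is the type `α`, may be infinite. -/
structure IsRankFunction (r : Finset α → ℕ) : Prop where
  le_card (A : Finset α) : r A ≤ #A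
  mono ⦃A B : Finset α⦄ : A ⊆ B → r A ≤ r B
  submod (A B : Finset α) : r (A ∪ B) + r (A ∩ B) ≤ r A + r B

namespace IsRankFunction

theorem indep_empty (hr : IsRankFunction r) : IsIndep r ∅ :=
  Nat.le_zero.1 (hr.le_card ∅)

theorem indep_of_subset (hr : IsRankFunction r) {D I : Finset α} (hDI : D ⊆ I)
    (hI : IsIndep r I) : IsIndep r D := by
  have hsub := hr.submod D (I \ D)
  rw [union_sdiff_of_subset hDI, inter_sdiff_self, hr.indep_empty, card_empty, hI] at hsub
  have hcard := card_sdiff_add_card_eq_card hDI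
  have hdiff := hr.le_card (I \ D)
  exact (hr.le_card D).antisymm (by omega)

theorem rank_insert_eq_of_subset (hr : IsRankFunction r) {I S : Finset α} (hIS : I ⊆ S)
    (hrank : r I = r S) (e : α) : r (insert e I) = r (insert e S) := by
  refine (hr.mono (insert_subset_insert e hIS)).antisymm ?_
  have hsub := hr.submod S (insert e I)
  rw [union_insert, union_eq_left.2 hIS] at hsub
  have hinter : r I ≤ r (S ∩ insert e I) := hr.mono (subset_inter hIS (subset_insert e I))
  omega

theorem exists_indep_subset_rank_eq (hr : IsRankFunction r) (S : Finset α) :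
    ∃ I ⊆ S, IsIndep r I ∧ r I = r S := by
  induction S using Finset.induction_on with
  | empty => exact ⟨∅, Subset.rfl, hr.indep_empty, rfl⟩
  | insert e S _ ih =>
    obtain ⟨I, hIS, hI, hrank⟩ := ih
    have hinsert := hr.rank_insert_eq_of_subset hIS hrank e
    by_cases hins : IsIndep r (insert e I)
    · exact ⟨insert e I, insert_subset_insert e hIS, hins, hinsert⟩
    · refine ⟨I, hIS.trans (subset_insert e S), hI, hinsert ▸ ?_⟩
      have hlt : r (insert e I) < #(insert e I) := (hr.le_card _).lt_of_ne hins
      have hcard : #(insert e I) ≤ r I + 1 := hI.symm ▸ card_insert_le e I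
      exact (hr.mono (subset_insert e I)).antisymm (by omega)

theorem exists_isCircuit_mem (hr : IsRankFunction r) {I : Finset α} {e : α} (hI : IsIndep r I)
    (hdep : ¬ IsIndep r (insert e I)) : ∃ C ⊆ insert e I, IsCircuit r C ∧ e ∈ C := by
  obtain ⟨C, hCI, hC⟩ :=
    exists_minimal_le_of_wellFoundedLT (fun D ↦ ¬ IsIndep r D) (insert e I) hdep
  refine ⟨C, hCI, hC, by_contra fun he ↦ hC.prop ?_⟩
  exact hr.indep_of_subset ((subset_insert_iff_of_notMem he).1 hCI) hI

theorem rank_erase_of_isCircuit (hr : IsRankFunction r) {C : Finset α} (hC : IsCircuit r C)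
    {x : α} (hx : x ∈ C) : r (C.erase x) = r C := by
  have herase : r (C.erase x) = #(C.erase x) :=
    not_not.1 (hC.not_prop_of_lt (erase_ssubset hx))
  have hlt : r C < #C := (hr.le_card C).lt_of_ne hC.prop
  have hcard := card_erase_add_one hx
  exact (hr.mono (erase_subset x C)).antisymm (by omega)

end IsRankFunction

end RankFunction

section JointMap

open LinearMap Module Finset

variable {F α V : Type*} [Field F] [AddCommGroup V] [Module F V] {W : α → Type*}
  [∀ e, AddCommGroup (W e)] [∀ e, Module F (W e)] {T : ∀ e, V →ₗ[F] W e}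

theorem le_ker_jointMap_iff {K : Submodule F V} {S : Finset α} :
    K ≤ ker (jointMap T S) ↔ ∀ e ∈ S, K ≤ ker (T e) := by
  rw [jointMap, ker_pi, le_iInf_iff, Subtype.forall]

theorem ker_jointMap_le_ker_of_mem {S : Finset α} {e : α} (he : e ∈ S) :
    ker (jointMap T S) ≤ ker (T e) :=
  le_ker_jointMap_iff.1 le_rfl e he

theorem ker_jointMap_anti {A B : Finset α} (hAB : A ⊆ B) :
    ker (jointMap T B) ≤ ker (jointMap T A) :=
  le_ker_jointMap_iff.2 fun _ he ↦ ker_jointMap_le_ker_of_mem (hAB he)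

variable [DecidableEq α] {r : Finset α → ℕ}

theorem ker_jointMap_eq_of_indep_of_rank_eq (hr : IsRankFunction r)
    (hcircuit : ∀ C, IsCircuit r C → ∀ x ∈ C, ker (jointMap T (C.erase x)) ≤ ker (T x))
    {I S : Finset α} (hIS : I ⊆ S) (hI : IsIndep r I) (hrank : r I = r S) :
    ker (jointMap T I) = ker (jointMap T S) := by
  refine le_antisymm (le_ker_jointMap_iff.2 fun e heS ↦ ?_) (ker_jointMap_anti hIS)
  by_cases heI : e ∈ I
  · exact ker_jointMap_le_ker_of_mem heI
  have hdep : ¬ IsIndep r (insert e I) := fun hins ↦ by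
    have hle : r (insert e I) ≤ r S := hr.mono (insert_subset heS hIS)
    rw [hins, card_insert_of_notMem heI, ← hrank, hI] at hle
    omega
  obtain ⟨C, hCI, hC, heC⟩ := hr.exists_isCircuit_mem hI hdep
  calc ker (jointMap T I) ≤ ker (jointMap T (C.erase e)) :=
        ker_jointMap_anti (subset_insert_iff.1 hCI)
    _ ≤ ker (T e) := hcircuit C hC e heC

theorem ker_jointMap_erase_le_of_finrank_range [∀ e, FiniteDimensional F (W e)]
    {C : Finset α} {x : α} (hx : x ∈ C)
    (hrank : finrank F (range (jointMap T C)) = finrank F (range (jointMap T (C.erase x)))) :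
    ker (jointMap T (C.erase x)) ≤ ker (T x) := by
  have hker : ker (jointMap T C) = ker (jointMap T (C.erase x)) :=
    ker_eq_of_ker_le_of_finrank_range_eq (ker_jointMap_anti (erase_subset x C)) hrank
  exact hker ▸ ker_jointMap_le_ker_of_mem hx

theorem statement12_general (hr : IsRankFunction r) (c : ℕ) [∀ e, FiniteDimensional F (W e)]
    (T : ∀ e, V →ₗ[F] W e) :
    ((∀ A, IsIndep r A → finrank F (range (jointMap T A)) = c * #A) ∧
      (∀ C, IsCircuit r C → ∀ x ∈ C, ∃ S : ((e : ↥(C.erase x)) → W e.1) →ₗ[F] W x,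
        T x = S ∘ₗ jointMap T (C.erase x))) ↔
      ∀ S, finrank F (range (jointMap T S)) = c * r S := by
  simp only [exists_eq_comp_iff_ker_le_ker]
  constructor
  · rintro ⟨hindep, hcircuit⟩ S
    obtain ⟨I, hIS, hI, hrank⟩ := hr.exists_indep_subset_rank_eq S
    have hker := ker_jointMap_eq_of_indep_of_rank_eq hr hcircuit hIS hI hrank
    rw [← finrank_range_eq_of_ker_eq hker, hindep I hI, ← hI, hrank]
  · intro h
    refine ⟨fun A hA ↦ by rw [h, hA], fun C hC x hx ↦ ?_⟩
    apply ker_jointMap_erase_le_of_finrank_range hx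
    rw [h, h, hr.rank_erase_of_isCircuit hC hx]

end JointMap

/-- Let `M` be a simple matroid with rank function `r` on a finite ground
set, `F` a field, `c ≥ 1`, `V` a finite-dimensional `F`-vector space, `W_e` spaces of
dimension `c` and `T_e : V → W_e` linear maps. Then: (for every independent `A`,
`rank(T_A) = c·|A|`, and for every circuit `C` and `x ∈ C` the map `T_x` factors through
`T_{C∖{x}}`) if and only if `rank(T_S) = c·r(S)` for every `S`. -/
theorem statement12 {α : Type*} [Fintype α] [DecidableEq α] {F : Type*} [Field F]
    (r : Finset α → ℕ)
    (hr_le : ∀ A : Finset α, r A ≤ A.card)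
    (hr_mono : ∀ ⦃A B : Finset α⦄, A ⊆ B → r A ≤ r B)
    (hr_submod : ∀ A B : Finset α, r (A ∪ B) + r (A ∩ B) ≤ r A + r B)
    (hsimple : ∀ A : Finset α, A.card ≤ 2 → r A = A.card)
    (c : ℕ) (hc : 1 ≤ c)
    (V : Type*) [AddCommGroup V] [Module F V] [FiniteDimensional F V]
    (W : α → Type*) [∀ e, AddCommGroup (W e)] [∀ e, Module F (W e)]
    [∀ e, FiniteDimensional F (W e)]
    (hW : ∀ e, Module.finrank F (W e) = c)
    (T : ∀ e, V →ₗ[F] W e) :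
    ((∀ A : Finset α, r A = A.card →
        Module.finrank F ↥(LinearMap.range (jointMap T A)) = c * A.card) ∧
      (∀ C : Finset α, r C ≠ C.card → (∀ D ⊂ C, r D = D.card) → ∀ x ∈ C,
        ∃ S : ((e : ↥(C.erase x)) → W e.1) →ₗ[F] W x,
          T x = S ∘ₗ jointMap T (C.erase x))) ↔
      (∀ S : Finset α, Module.finrank F ↥(LinearMap.range (jointMap T S)) = c * r S) := by
  simpa only [IsIndep, IsCircuit, minimal_iff_forall_lt, not_not, and_imp]
    using statement12_general ⟨hr_le, hr_mono, hr_submod⟩ c T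
end

section
/- Let M be a matroid with rank function r on a finite ground set E, let μ be a discrete probability measure on a set Ω (determined by its point masses μ({ω}), which sum to 1), let Ω_e be sets and X_e : Ω → Ω_e maps for e ∈ E, and suppose there is a real number λ > 0 such that r(A) = λ·H(X_A) for every A ⊆ E, where for each A ⊆ E the defining sum of H(X_A) is assumed to converge. Then the family {X_e}_{e∈E} is a discrete probability space representation of M with the determination condition holding on the support of μ; that is: (independence) for every independent set A ⊆ E and every y ∈ Π_{e∈A} Ω_e, P(X_A = y) = Π_{e∈A} P(X_e = y_e); (determination) for every circuit C of M and every x ∈ C there exists a map f : Π_{e∈C∖{x}} Ω_e → Ω_x with X_x(ω) = f((X_e(ω))_{e∈C∖{x}}) for every ω ∈ Ω with μ({ω}) > 0; (nontriviality) for every non-loop e ∈ E there exist ω, ω' ∈ Ω with μ({ω}) > 0, μ({ω'}) > 0 and X_e(ω) ≠ X_e(ω'). -/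
/-- `P(X = y)`: the total mass, under the point masses `p`, of the fiber of `X` over `y`. -/
noncomputable def prMass {Ω S : Type*} (p : Ω → ℝ) (X : Ω → S) (y : S) : ℝ :=
  ∑' ω : {w : Ω // X w = y}, p ω.1

/-- The Shannon entropy `H(X) = Σ_y −P(X = y)·ln P(X = y)` (with `0·ln 0 = 0`). -/
noncomputable def entropy {Ω S : Type*} (p : Ω → ℝ) (X : Ω → S) : ℝ :=
  ∑' y : S, Real.negMulLog (prMass p X y)

/-- The joint map `X_A : Ω → Π_{e∈A} Ω_e`, `ω ↦ (X_e(ω))_{e∈A}`. -/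
def jointRV {α Ω : Type*} {Ωe : α → Type*} (X : ∀ e, Ω → Ωe e) (A : Finset α) :
    Ω → ((e : ↥A) → Ωe e.1) :=
  fun ω e => X e.1 ω

/-!
Everything rests on two equality cases. Subadditivity `H(X_A) ≤ ∑ H(X_e)` is Gibbs' inequality for
the joint distribution against the product of its marginals, with equality only under
independence; on an independent set `A` it is an equality because `|A| = λ H(X_A)`, while
`λ H(X_e) = r{e} ≤ 1`. If `Y` is a function of `X` then `H(Y) ≤ H(X)`, with equality only if `X` is,
on the support, a function of `Y`; on a circuit `C` this applies to `X_C` and `X_{C∖{x}}`, because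
`r(C) ≤ r(C∖{x})`. Finally, a map that is constant on the support has entropy zero.
-/

lemma hasSum_of_tsum_eq_of_ne_zero {ι M : Type*} [AddCommMonoid M] [TopologicalSpace M]
    {f : ι → M} {a : M} (h : ∑' i, f i = a) (ha : a ≠ 0) : HasSum f a := by
  have hf : Summable f := by
    by_contra hdiv
    exact ha (h ▸ tsum_eq_zero_of_not_summable hdiv)
  exact h ▸ hf.hasSum

section PointMasses

variable {Ω S T : Type*} {p : Ω → ℝ} {s : ℝ}

lemma prMass_eq_tsum_indicator (p : Ω → ℝ) (X : Ω → S) (y : S) :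
    prMass p X y = ∑' ω, (X ⁻¹' {y}).indicator p ω :=
  tsum_subtype (X ⁻¹' {y}) p

lemma prMass_nonneg (hp0 : ∀ ω, 0 ≤ p ω) (X : Ω → S) (y : S) : 0 ≤ prMass p X y :=
  tsum_nonneg fun _ => hp0 _

lemma le_prMass_apply (hp0 : ∀ ω, 0 ≤ p ω) (hp : Summable p) (X : Ω → S) (ω : Ω) :
    p ω ≤ prMass p X (X ω) :=
  (hp.subtype (X ⁻¹' {X ω})).le_tsum ⟨ω, rfl⟩ fun _ _ => hp0 _

lemma prMass_le_prMass (hp0 : ∀ ω, 0 ≤ p ω) (hp : Summable p) {X : Ω → S} {Y : Ω → T} {y : S}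
    {z : T} (h : X ⁻¹' {y} ⊆ Y ⁻¹' {z}) : prMass p X y ≤ prMass p Y z := by
  rw [prMass_eq_tsum_indicator, prMass_eq_tsum_indicator]
  exact (hp.indicator _).tsum_le_tsum (Set.indicator_le_indicator_of_subset h hp0) (hp.indicator _)

lemma prMass_pi_le_marginal {ι : Type*} {S : ι → Type*} (hp0 : ∀ ω, 0 ≤ p ω) (hp : Summable p)
    (X : ∀ i, Ω → S i) (y : ∀ i, S i) (i : ι) :
    prMass p (fun ω i => X i ω) y ≤ prMass p (X i) (y i) :=
  prMass_le_prMass hp0 hp fun _ h => congrFun h i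

lemma prMass_lt_prMass (hp0 : ∀ ω, 0 ≤ p ω) (hp : Summable p) {X : Ω → S} {Y : Ω → T} {y : S}
    {z : T} (h : X ⁻¹' {y} ⊆ Y ⁻¹' {z}) {ω : Ω} (hω : 0 < p ω) (hX : X ω ≠ y) (hY : Y ω = z) :
    prMass p X y < prMass p Y z := by
  rw [prMass_eq_tsum_indicator, prMass_eq_tsum_indicator]
  refine Summable.tsum_lt_tsum (i := ω) (Set.indicator_le_indicator_of_subset h hp0) ?_
    (hp.indicator _) (hp.indicator _)
  rwa [Set.indicator_of_notMem (by simpa using hX), Set.indicator_of_mem (by simpa using hY)]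

lemma prMass_le_of_hasSum (hp0 : ∀ ω, 0 ≤ p ω) (hp : HasSum p s) (X : Ω → S) (y : S) :
    prMass p X y ≤ s :=
  hasSum_le_inj _ Subtype.val_injective (fun ω _ => hp0 ω) (fun _ => le_rfl)
    (hp.summable.subtype _).hasSum hp

lemma prMass_equiv_comp (e : S ≃ T) (p : Ω → ℝ) (X : Ω → S) (y : S) :
    prMass p (e ∘ X) (e y) = prMass p X y := by
  have hfiber : (e ∘ X) ⁻¹' {e y} = X ⁻¹' {y} := by ext; simp
  rw [prMass_eq_tsum_indicator, hfiber, prMass_eq_tsum_indicator]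

lemma hasSum_prMass_mul_iff (hp0 : ∀ ω, 0 ≤ p ω) (hp : Summable p) (X : Ω → S) {g : S → ℝ}
    (hg : ∀ y, 0 ≤ g y) {a : ℝ} :
    HasSum (fun y => prMass p X y * g y) a ↔ HasSum (fun ω => p ω * g (X ω)) a := by
  let F (q : Σ y : S, {ω : Ω // X ω = y}) : ℝ := p q.2.1 * g (X q.2.1)
  have hfiber (y : S) : HasSum (fun ω => F ⟨y, ω⟩) (prMass p X y * g y) := by
    have hF : (fun ω => F ⟨y, ω⟩) = fun ω => p ω.1 * g y :=
      funext fun ω => congrArg (p ω.1 * g ·) ω.2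
    rw [hF]
    exact (hp.subtype (X ⁻¹' {y})).hasSum.mul_right (g y)
  rw [← (Equiv.sigmaFiberEquiv X).hasSum_iff]
  refine ⟨fun h => h.sigma_of_hasSum hfiber ?_, fun h => h.sigma hfiber⟩
  refine (summable_sigma_of_nonneg fun q => mul_nonneg (hp0 _) (hg _)).2
    ⟨fun y => (hfiber y).summable, h.summable.congr fun y => ((hfiber y).tsum_eq).symm⟩

lemma hasSum_prMass (hp : HasSum p s) (X : Ω → S) : HasSum (prMass p X) s :=
  ((Equiv.sigmaFiberEquiv X).hasSum_iff.2 hp).sigma fun y =>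
    (hp.summable.subtype (X ⁻¹' {y})).hasSum

end PointMasses

section Entropy

variable {Ω S T : Type*} {p : Ω → ℝ}

lemma neg_log_prMass_nonneg (hp0 : ∀ ω, 0 ≤ p ω) (hp : HasSum p 1) (X : Ω → S) (y : S) :
    0 ≤ -Real.log (prMass p X y) :=
  neg_nonneg.2 <| Real.log_nonpos (prMass_nonneg hp0 X y) (prMass_le_of_hasSum hp0 hp X y)

lemma hasSum_mul_neg_log_prMass (hp0 : ∀ ω, 0 ≤ p ω) (hp : HasSum p 1) (X : Ω → S)
    (hX : Summable fun y => Real.negMulLog (prMass p X y)) :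
    HasSum (fun ω => p ω * -Real.log (prMass p X (X ω))) (entropy p X) := by
  rw [← hasSum_prMass_mul_iff hp0 hp.summable X (neg_log_prMass_nonneg hp0 hp X)]
  simpa only [entropy, Real.negMulLog_eq_neg, mul_neg] using hX.hasSum

lemma summable_negMulLog_prMass_equiv_comp (e : S ≃ T) (p : Ω → ℝ) (X : Ω → S) :
    (Summable fun z => Real.negMulLog (prMass p (e ∘ X) z)) ↔
      Summable fun y => Real.negMulLog (prMass p X y) := by
  rw [← e.summable_iff]
  simp only [Function.comp_def (β := T), ← prMass_equiv_comp e p X]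

lemma entropy_equiv_comp (e : S ≃ T) (p : Ω → ℝ) (X : Ω → S) :
    entropy p (e ∘ X) = entropy p X := by
  simp only [entropy, ← prMass_equiv_comp e p X]
  exact (e.tsum_eq fun z => Real.negMulLog (prMass p (e ∘ X) z)).symm

lemma entropy_eq_zero_of_constant_on_support (hp0 : ∀ ω, 0 ≤ p ω) (hp : HasSum p 1) {X : Ω → S}
    (hX : ∀ ω ω', 0 < p ω → 0 < p ω' → X ω = X ω') : entropy p X = 0 := by
  have hzero_one (y : S) : prMass p X y = 0 ∨ prMass p X y = 1 := by
    rw [prMass_eq_tsum_indicator]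
    by_cases hy : ∃ ω, 0 < p ω ∧ X ω = y
    · obtain ⟨ω, hω, rfl⟩ := hy
      right
      have hfull : (X ⁻¹' {X ω}).indicator p = p := Set.indicator_eq_self.2 fun ω' hω' =>
        hX ω' ω ((hp0 ω').lt_of_ne' hω') hω
      rw [hfull, hp.tsum_eq]
    · left
      have hnull : (X ⁻¹' {y}).indicator p = 0 := Set.indicator_eq_zero.2 <|
        Set.disjoint_left.2 fun ω hω hωy => hy ⟨ω, (hp0 ω).lt_of_ne' hω, hωy⟩
      simp [hnull]
  have hterm (y : S) : Real.negMulLog (prMass p X y) = 0 := by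
    rcases hzero_one y with h | h <;> simp [h]
  simp [entropy, hterm]

end Entropy

section Determination

variable {Ω S T : Type*} {p : Ω → ℝ} {X : Ω → S} {Y : Ω → T}

lemma prMass_le_prMass_of_factorsThrough (hp0 : ∀ ω, 0 ≤ p ω) (hp : Summable p)
    (hYX : Y.FactorsThrough X) (ω : Ω) : prMass p X (X ω) ≤ prMass p Y (Y ω) :=
  prMass_le_prMass hp0 hp fun _ h => hYX h

lemma prMass_eq_prMass_of_entropy_le (hp0 : ∀ ω, 0 ≤ p ω) (hp : HasSum p 1)
    (hYX : Y.FactorsThrough X) (hX : Summable fun y => Real.negMulLog (prMass p X y))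
    (hY : Summable fun z => Real.negMulLog (prMass p Y z)) (hle : entropy p X ≤ entropy p Y)
    {ω : Ω} (hω : 0 < p ω) : prMass p X (X ω) = prMass p Y (Y ω) := by
  have hpos {ω' : Ω} (hω' : 0 < p ω') : 0 < prMass p X (X ω') :=
    hω'.trans_le (le_prMass_apply hp0 hp.summable X ω')
  have hmono := prMass_le_prMass_of_factorsThrough hp0 hp.summable hYX
  have hpointwise (ω' : Ω) :
      p ω' * -Real.log (prMass p Y (Y ω')) ≤ p ω' * -Real.log (prMass p X (X ω')) := by
    rcases (hp0 ω').eq_or_lt with h | h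
    · simp [← h]
    · gcongr
      exacts [hpos h, hmono ω']
  by_contra hne
  have hlog : Real.log (prMass p X (X ω)) < Real.log (prMass p Y (Y ω)) :=
    Real.log_lt_log (hpos hω) ((hmono ω).lt_of_ne hne)
  exact hle.not_gt <| hasSum_lt hpointwise (mul_lt_mul_of_pos_left (neg_lt_neg hlog) hω)
    (hasSum_mul_neg_log_prMass hp0 hp Y hY) (hasSum_mul_neg_log_prMass hp0 hp X hX)

lemma eq_of_entropy_le (hp0 : ∀ ω, 0 ≤ p ω) (hp : HasSum p 1)
    (hYX : Y.FactorsThrough X) (hX : Summable fun y => Real.negMulLog (prMass p X y))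
    (hY : Summable fun z => Real.negMulLog (prMass p Y z)) (hle : entropy p X ≤ entropy p Y)
    {ω ω' : Ω} (hω : 0 < p ω) (hω' : 0 < p ω') (h : Y ω = Y ω') : X ω = X ω' := by
  by_contra hne
  have hlt : prMass p X (X ω') < prMass p Y (Y ω') :=
    prMass_lt_prMass hp0 hp.summable (fun _ h' => hYX h') hω hne h
  exact hlt.ne (prMass_eq_prMass_of_entropy_le hp0 hp hYX hX hY hle hω')

lemma exists_eqOn_comp [Nonempty S] {s : Set Ω}
    (h : ∀ ω ∈ s, ∀ ω' ∈ s, Y ω = Y ω' → X ω = X ω') : ∃ f : T → S, Set.EqOn X (f ∘ Y) s := by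
  have hfactors : (s.domRestrict X).FactorsThrough (s.domRestrict Y) :=
    fun ω ω' hY => h ω ω.2 ω' ω'.2 hY
  obtain ⟨f, hf⟩ := (Function.factorsThrough_iff _).1 hfactors
  exact ⟨f, fun ω hω => congrFun hf ⟨ω, hω⟩⟩

end Determination

section Gibbs

open InformationTheory

lemma mul_klFun_div {a b : ℝ} (hab : b = 0 → a = 0) :
    b * klFun (a / b) = a * -Real.log b - Real.negMulLog a + (b - a) := by
  rcases eq_or_ne a 0 with rfl | ha
  · simp [klFun_zero]
  · have hb : b ≠ 0 := mt hab ha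
    rw [klFun_apply, Real.log_div ha hb, Real.negMulLog]
    field_simp
    ring

lemma eq_of_crossEntropy_le_entropy {S : Type*} {P Q : S → ℝ} {s t H K : ℝ}
    (hP0 : ∀ y, 0 ≤ P y) (hQ0 : ∀ y, 0 ≤ Q y) (hPQ : ∀ y, Q y = 0 → P y = 0)
    (hP : HasSum P s) (hQ : HasSum Q t) (hts : t ≤ s)
    (hH : HasSum (fun y => Real.negMulLog (P y)) H)
    (hK : HasSum (fun y => P y * -Real.log (Q y)) K) (hKH : K ≤ H) : P = Q := by
  have hdiv : HasSum (fun y => Q y * klFun (P y / Q y)) (K - H + (t - s)) := by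
    simpa only [mul_klFun_div (hPQ _)] using (hK.sub hH).add (hQ.sub hP)
  have hnonneg (y : S) : 0 ≤ Q y * klFun (P y / Q y) :=
    mul_nonneg (hQ0 y) (klFun_nonneg (div_nonneg (hP0 y) (hQ0 y)))
  have hzero : K - H + (t - s) = 0 := le_antisymm (by linarith) (hdiv.nonneg hnonneg)
  rw [hzero, hasSum_zero_iff_of_nonneg hnonneg] at hdiv
  funext y
  rcases mul_eq_zero.1 (congrFun hdiv y) with hy | hy
  · rw [hy, hPQ y hy]
  · exact eq_of_div_eq_one ((klFun_eq_zero_iff (div_nonneg (hP0 y) (hQ0 y))).1 hy)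

end Gibbs

section Independence

variable {ι Ω : Type*} [Fintype ι] {S : ι → Type*}

lemma sum_prod_le_prod_of_hasSum {P : ∀ i, S i → ℝ} {s : ι → ℝ} (hP0 : ∀ i z, 0 ≤ P i z)
    (hP : ∀ i, HasSum (P i) (s i)) (F : Finset (∀ i, S i)) :
    ∑ y ∈ F, ∏ i, P i (y i) ≤ ∏ i, s i := by
  classical
  calc ∑ y ∈ F, ∏ i, P i (y i)
      ≤ ∑ y ∈ Fintype.piFinset fun i => F.image fun y => y i, ∏ i, P i (y i) := by
        refine Finset.sum_le_sum_of_subset_of_nonneg (fun y hy => ?_)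
          fun y _ _ => Finset.prod_nonneg fun i _ => hP0 i _
        exact Fintype.mem_piFinset.2 fun i => Finset.mem_image_of_mem _ hy
    _ = ∏ i, ∑ z ∈ F.image fun y => y i, P i z := (Finset.prod_univ_sum _ _).symm
    _ ≤ ∏ i, s i := Finset.prod_le_prod (fun i _ => Finset.sum_nonneg fun z _ => hP0 i z)
        fun i _ => sum_le_hasSum _ (fun z _ => hP0 i z) (hP i)

lemma exists_hasSum_prod_le_prod {P : ∀ i, S i → ℝ} {s : ι → ℝ} (hP0 : ∀ i z, 0 ≤ P i z)
    (hP : ∀ i, HasSum (P i) (s i)) :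
    ∃ t ≤ ∏ i, s i, HasSum (fun y : ∀ i, S i => ∏ i, P i (y i)) t := by
  have hsummable : Summable fun y : ∀ i, S i => ∏ i, P i (y i) :=
    summable_of_sum_le (fun y => Finset.prod_nonneg fun i _ => hP0 i _)
      (sum_prod_le_prod_of_hasSum hP0 hP)
  exact ⟨_, hsummable.tsum_le_of_sum_le (sum_prod_le_prod_of_hasSum hP0 hP), hsummable.hasSum⟩

variable {p : Ω → ℝ}

lemma hasSum_crossEntropy_prod_marginals (hp0 : ∀ ω, 0 ≤ p ω) (hp : HasSum p 1)
    (X : ∀ i, Ω → S i) (hX : ∀ i, Summable fun z => Real.negMulLog (prMass p (X i) z)) :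
    HasSum (fun y => prMass p (fun ω i => X i ω) y * -Real.log (∏ i, prMass p (X i) (y i)))
      (∑ i, entropy p (X i)) := by
  have hmarginal (i : ι) : HasSum
      (fun y => prMass p (fun ω i => X i ω) y * -Real.log (prMass p (X i) (y i)))
      (entropy p (X i)) :=
    (hasSum_prMass_mul_iff hp0 hp.summable (fun ω i => X i ω)
      fun y => neg_log_prMass_nonneg hp0 hp (X i) (y i)).2
      (hasSum_mul_neg_log_prMass hp0 hp (X i) (hX i))
  refine (hasSum_sum fun i _ => hmarginal i).congr_fun fun y => ?_
  rcases (prMass_nonneg hp0 (fun ω i => X i ω) y).eq_or_lt with hy | hy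
  · simp [← hy]
  · have hne (i : ι) : prMass p (X i) (y i) ≠ 0 :=
      (hy.trans_le (prMass_pi_le_marginal hp0 hp.summable X y i)).ne'
    rw [Real.log_prod fun i _ => hne i, ← Finset.mul_sum, Finset.sum_neg_distrib]

theorem prMass_pi_eq_prod_of_sum_entropy_le (hp0 : ∀ ω, 0 ≤ p ω) (hp : HasSum p 1)
    (X : ∀ i, Ω → S i) (hX : ∀ i, Summable fun z => Real.negMulLog (prMass p (X i) z))
    (hjoint : Summable fun y => Real.negMulLog (prMass p (fun ω i => X i ω) y))
    (hle : ∑ i, entropy p (X i) ≤ entropy p fun ω i => X i ω) (y : ∀ i, S i) :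
    prMass p (fun ω i => X i ω) y = ∏ i, prMass p (X i) (y i) := by
  obtain ⟨t, ht, hprod⟩ := exists_hasSum_prod_le_prod (fun i => prMass_nonneg hp0 (X i))
    fun i => hasSum_prMass hp (X i)
  rw [Finset.prod_const_one] at ht
  refine congrFun (eq_of_crossEntropy_le_entropy (prMass_nonneg hp0 _)
    (fun y => Finset.prod_nonneg fun i _ => prMass_nonneg hp0 _ _) (fun y hy => ?_)
    (hasSum_prMass hp _) hprod ht hjoint.hasSum
    (hasSum_crossEntropy_prod_marginals hp0 hp X hX) hle) y
  obtain ⟨i, -, hi⟩ := Finset.prod_eq_zero_iff.1 hy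
  exact le_antisymm (hi ▸ prMass_pi_le_marginal hp0 hp.summable X y i) (prMass_nonneg hp0 _ y)

end Independence

section JointMaps

variable {α Ω : Type*} {Ωe : α → Type*} {p : Ω → ℝ} {X : ∀ e, Ω → Ωe e}

lemma jointRV_factorsThrough {A B : Finset α} (hBA : B ⊆ A) :
    (jointRV X B).FactorsThrough (jointRV X A) :=
  fun _ _ h => funext fun e => congrFun h ⟨e, hBA e.2⟩

lemma entropy_jointRV_singleton (p : Ω → ℝ) (X : ∀ e, Ω → Ωe e) (e : α) :
    entropy p (jointRV X {e}) = entropy p (X e) :=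
  (entropy_equiv_comp (Equiv.piUnique fun i : ({e} : Finset α) => Ωe i) p (jointRV X {e})).symm

lemma summable_negMulLog_prMass_jointRV_singleton (p : Ω → ℝ) (X : ∀ e, Ω → Ωe e) (e : α) :
    (Summable fun y => Real.negMulLog (prMass p (jointRV X {e}) y)) ↔
      Summable fun z => Real.negMulLog (prMass p (X e) z) :=
  (summable_negMulLog_prMass_equiv_comp (Equiv.piUnique fun i : ({e} : Finset α) => Ωe i) p
    (jointRV X {e})).symm

theorem prMass_jointRV_eq_prod_of_sum_entropy_le (hp0 : ∀ ω, 0 ≤ p ω) (hp : HasSum p 1)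
    {A : Finset α}
    (hsingle : ∀ e ∈ A, Summable fun y => Real.negMulLog (prMass p (jointRV X {e}) y))
    (hjoint : Summable fun y => Real.negMulLog (prMass p (jointRV X A) y))
    (hle : ∑ e ∈ A, entropy p (jointRV X {e}) ≤ entropy p (jointRV X A)) (y : (e : A) → Ωe e) :
    prMass p (jointRV X A) y = ∏ e : A, prMass p (X e) (y e) := by
  simp only [summable_negMulLog_prMass_jointRV_singleton] at hsingle
  simp only [entropy_jointRV_singleton, ← A.sum_coe_sort] at hle
  exact prMass_pi_eq_prod_of_sum_entropy_le hp0 hp (fun e : A => X e)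
    (fun e => hsingle e e.2) hjoint hle y

theorem exists_eq_comp_jointRV_of_entropy_le (hp0 : ∀ ω, 0 ≤ p ω) (hp : HasSum p 1)
    {A B : Finset α} (hBA : B ⊆ A)
    (hA : Summable fun y => Real.negMulLog (prMass p (jointRV X A) y))
    (hB : Summable fun y => Real.negMulLog (prMass p (jointRV X B) y))
    (hle : entropy p (jointRV X A) ≤ entropy p (jointRV X B)) {x : α} (hx : x ∈ A) :
    ∃ f : ((e : B) → Ωe e) → Ωe x, ∀ ω, 0 < p ω → X x ω = f (jointRV X B ω) := by
  have : Nonempty (Ωe x) := by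
    by_contra hempty
    have : IsEmpty Ω := ⟨fun ω => hempty ⟨X x ω⟩⟩
    exact one_ne_zero (hp.unique hasSum_empty)
  refine exists_eqOn_comp (s := {ω | 0 < p ω}) fun ω hω ω' hω' h => ?_
  have hjoint : jointRV X A ω = jointRV X A ω' :=
    eq_of_entropy_le hp0 hp (jointRV_factorsThrough hBA) hA hB hle hω hω' h
  exact congrFun hjoint ⟨x, hx⟩

end JointMaps

theorem statement17_general {α : Type*} [DecidableEq α] (r : Finset α → ℕ)
    (hr_le : ∀ A : Finset α, r A ≤ A.card)
    {Ω : Type*} (p : Ω → ℝ) (hp0 : ∀ ω, 0 ≤ p ω) (hp1 : ∑' ω, p ω = 1)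
    (Ωe : α → Type*) (X : ∀ e, Ω → Ωe e)
    (lam : ℝ) (hlam : 0 < lam)
    (hconv : ∀ A : Finset α,
      Summable fun y : (e : ↥A) → Ωe e.1 => Real.negMulLog (prMass p (jointRV X A) y))
    (hent : ∀ A : Finset α, (r A : ℝ) = lam * entropy p (jointRV X A)) :
    (∀ A : Finset α, r A = A.card → ∀ y : (e : ↥A) → Ωe e.1,
        prMass p (jointRV X A) y = ∏ e : ↥A, prMass p (X e.1) (y e)) ∧
      (∀ C : Finset α, r C ≠ C.card → (∀ D ⊂ C, r D = D.card) → ∀ x ∈ C,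
        ∃ f : ((e : ↥(C.erase x)) → Ωe e.1) → Ωe x,
          ∀ ω, 0 < p ω → X x ω = f (jointRV X (C.erase x) ω)) ∧
      (∀ e : α, r {e} ≠ 0 →
        ∃ ω ω', 0 < p ω ∧ 0 < p ω' ∧ X e ω ≠ X e ω') := by
  have hp : HasSum p 1 := hasSum_of_tsum_eq_of_ne_zero hp1 one_ne_zero
  refine ⟨fun A hA => ?_, fun C hC hmin x hx => ?_, fun e he => ?_⟩
  · have hsum : ∑ e ∈ A, r {e} ≤ r A := by
      simpa [hA] using Finset.sum_le_card_nsmul A (fun e => r {e}) 1 fun e _ => hr_le {e}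
    refine prMass_jointRV_eq_prod_of_sum_entropy_le hp0 hp (fun e _ => hconv {e}) (hconv A)
      (le_of_mul_le_mul_left ?_ hlam)
    simp only [Finset.mul_sum, ← hent]
    exact_mod_cast hsum
  · have hrank : r C ≤ r (C.erase x) := by
      rw [hmin _ (Finset.erase_ssubset hx), Finset.card_erase_of_mem hx]
      exact Nat.le_sub_one_of_lt ((hr_le C).lt_of_ne hC)
    refine exists_eq_comp_jointRV_of_entropy_le hp0 hp (C.erase_subset x) (hconv _) (hconv _)
      (le_of_mul_le_mul_left ?_ hlam) hx
    rw [← hent, ← hent]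
    exact_mod_cast hrank
  · by_contra! hconst
    have hzero : entropy p (X e) = 0 := entropy_eq_zero_of_constant_on_support hp0 hp hconst
    have hr0 := hent {e}
    rw [entropy_jointRV_singleton, hzero, mul_zero] at hr0
    exact he (mod_cast hr0)

/-- Let `M` be a matroid with rank function `r` on a finite ground set,
`μ` a discrete probability measure given by point masses `p`, `X_e : Ω → Ω_e` maps, and
`λ > 0` with `r(A) = λ·H(X_A)` for every `A` (all defining sums converging). Then the
family `{X_e}` is a discrete probability space representation of `M`, with the
determination condition holding on the support of `μ`: independence on independent sets,
determination on circuits (on the support), and nontriviality at non-loops. -/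
theorem statement17 {α : Type*} [Fintype α] [DecidableEq α] (r : Finset α → ℕ)
    (hr_le : ∀ A : Finset α, r A ≤ A.card)
    (hr_mono : ∀ ⦃A B : Finset α⦄, A ⊆ B → r A ≤ r B)
    (hr_submod : ∀ A B : Finset α, r (A ∪ B) + r (A ∩ B) ≤ r A + r B)
    {Ω : Type*} (p : Ω → ℝ) (hp0 : ∀ ω, 0 ≤ p ω) (hp1 : ∑' ω, p ω = 1)
    (Ωe : α → Type*) (X : ∀ e, Ω → Ωe e)
    (lam : ℝ) (hlam : 0 < lam)
    (hconv : ∀ A : Finset α,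
      Summable fun y : (e : ↥A) → Ωe e.1 => Real.negMulLog (prMass p (jointRV X A) y))
    (hent : ∀ A : Finset α, (r A : ℝ) = lam * entropy p (jointRV X A)) :
    -- independence
    ((∀ A : Finset α, r A = A.card → ∀ y : (e : ↥A) → Ωe e.1,
        prMass p (jointRV X A) y = ∏ e : ↥A, prMass p (X e.1) (y e)) ∧
    -- determination (on the support of μ)
      (∀ C : Finset α, r C ≠ C.card → (∀ D ⊂ C, r D = D.card) → ∀ x ∈ C,
        ∃ f : ((e : ↥(C.erase x)) → Ωe e.1) → Ωe x,
          ∀ ω, 0 < p ω → X x ω = f (jointRV X (C.erase x) ω)) ∧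
    -- nontriviality
      (∀ e : α, r {e} ≠ 0 →
        ∃ ω ω', 0 < p ω ∧ 0 < p ω' ∧ X e ω ≠ X e ω')) :=
  statement17_general r hr_le p hp0 hp1 Ωe X lam hlam hconv hent
end

section
/- Let M be a connected matroid of rank at least two on a finite ground set E, and let {X_e : Ω → Ω_e}_{e∈E} together with a discrete probability measure μ on Ω be a discrete probability space representation of M. Then the variables X_e are all uniformly distributed with a common positive point mass: for all e, e' ∈ E and all a ∈ Ω_e, b ∈ Ω_{e'}, if P(X_e = a) > 0 and P(X_{e'} = b) > 0 then P(X_e = a) = P(X_{e'} = b); in particular, each X_e takes only finitely many values with positive probability. -/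
/-!
Let `C` be a circuit and let `ω` be an outcome of positive mass. For `x ∈ C` the event
`X_C = X_C(ω)` is the event `X_{C∖x} = X_{C∖x}(ω)`, because `X_{C∖x}` determines `X_x`. As `C∖x` is
independent, this gives `P(X_C = X_C(ω)) * P(X_x = X_x(ω)) = ∏_{e∈C} P(X_e = X_e(ω))`, and
neither the right-hand side nor the first factor depends on `x`.

If `{x, y}` is independent, any two values of positive probability of `X_x` and `X_y` are attained
at a common outcome of positive mass, so a circuit through `x` and `y` shows that they have equal
probability. Two parallel elements are compared through an element parallel to neither.
-/

section PointMasses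

variable {Ω S T : Type*} {p : Ω → ℝ}

theorem prMass_congr {X : Ω → S} {Y : Ω → T} {x : S} {y : T} (h : ∀ ω, X ω = x ↔ Y ω = y) :
    prMass p X x = prMass p Y y :=
  (Equiv.subtypeEquivRight h).tsum_eq fun w : {w : Ω // Y w = y} => p w.1

theorem exists_pos_of_prMass_pos {X : Ω → S} {y : S} (h : 0 < prMass p X y) :
    ∃ ω, 0 < p ω ∧ X ω = y := by
  by_contra! hzero
  exact h.not_ge (tsum_nonpos fun ω => not_lt.1 fun hω => hzero ω.1 hω ω.2)

theorem prMass_apply_pos (hp0 : ∀ ω, 0 ≤ p ω) (hp : Summable p) (X : Ω → S) {ω : Ω}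
    (hω : 0 < p ω) : 0 < prMass p X (X ω) :=
  (hp.comp_injective Subtype.val_injective).tsum_pos (fun w => hp0 w.1) ⟨ω, rfl⟩ hω

theorem finite_setOf_prMass_pos (hp : Summable p) {X : Ω → S}
    (huniform : ∀ a b, 0 < prMass p X a → 0 < prMass p X b → prMass p X a = prMass p X b) :
    {a | 0 < prMass p X a}.Finite := by
  rcases Set.eq_empty_or_nonempty {a | 0 < prMass p X a} with hempty | ⟨a, ha⟩
  · exact hempty ▸ Set.finite_empty
  · have hsummable : Summable (prMass p X) := (hp.hasSum.tsum_fiberwise X).summable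
    have hfinite := Filter.eventually_cofinite.1
      (hsummable.tendsto_cofinite_zero.eventually (gt_mem_nhds ha))
    exact hfinite.subset fun b hb => (huniform a b ha hb).not_gt

end PointMasses

section JointVariables

variable {α Ω : Type*} {Ωe : α → Type*} {p : Ω → ℝ} {X : ∀ e, Ω → Ωe e}

theorem jointRV_eq_iff {A : Finset α} {ω ω' : Ω} :
    jointRV X A ω = jointRV X A ω' ↔ ∀ e ∈ A, X e ω = X e ω' :=
  funext_iff.trans Subtype.forall

/-- Mutual independence of the family `(X_e)_{e∈A}` with respect to the point masses `p`: the joint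
distribution is the product of the marginal ones. -/
def IsJointlyIndep (p : Ω → ℝ) (X : ∀ e, Ω → Ωe e) (A : Finset α) : Prop :=
  ∀ y : (e : ↥A) → Ωe e.1, prMass p (jointRV X A) y = ∏ e : ↥A, prMass p (X e.1) (y e)

theorem IsJointlyIndep.prMass_jointRV_apply {A : Finset α} (hA : IsJointlyIndep p X A) (ω : Ω) :
    prMass p (jointRV X A) (jointRV X A ω) = ∏ e ∈ A, prMass p (X e) (X e ω) :=
  (hA _).trans (Finset.prod_coe_sort A fun e => prMass p (X e) (X e ω))

theorem IsJointlyIndep.exists_pos_forall_eq (hp0 : ∀ ω, 0 ≤ p ω) (hp : Summable p)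
    {A : Finset α} (hA : IsJointlyIndep p X A) (w : α → Ω) (hw : ∀ e ∈ A, 0 < p (w e)) :
    ∃ ω, 0 < p ω ∧ ∀ e ∈ A, X e ω = X e (w e) := by
  have hpos : 0 < prMass p (jointRV X A) fun e => X e.1 (w e.1) := by
    rw [hA]
    exact Finset.prod_pos fun e _ => prMass_apply_pos hp0 hp _ (hw e.1 e.2)
  obtain ⟨ω, hω, hωw⟩ := exists_pos_of_prMass_pos hpos
  exact ⟨ω, hω, fun e he => congrFun hωw ⟨e, he⟩⟩

variable [DecidableEq α]

theorem prMass_jointRV_mul_prMass {C : Finset α} {x : α} (hx : x ∈ C)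
    (hindep : IsJointlyIndep p X (C.erase x))
    (hdet : (X x).FactorsThrough (jointRV X (C.erase x))) (ω : Ω) :
    prMass p (jointRV X C) (jointRV X C ω) * prMass p (X x) (X x ω) =
      ∏ e ∈ C, prMass p (X e) (X e ω) := by
  have hevent (w : Ω) :
      jointRV X C w = jointRV X C ω ↔ jointRV X (C.erase x) w = jointRV X (C.erase x) ω := by
    refine ⟨fun h => jointRV_eq_iff.2 fun e he =>
      jointRV_eq_iff.1 h e (Finset.mem_of_mem_erase he), fun h => ?_⟩
    rw [jointRV_eq_iff, ← Finset.insert_erase hx, Finset.forall_mem_insert]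
    exact ⟨hdet h, jointRV_eq_iff.1 h⟩
  rw [prMass_congr hevent, hindep.prMass_jointRV_apply, Finset.prod_erase_mul _ _ hx]

end JointVariables

section RankFunctions

variable {α : Type*} {r : Finset α → ℕ}

/-- The circuits of the matroid with rank function `r`, i.e. its minimal dependent sets; a set is
independent when its rank is its cardinality. -/
def IsRankCircuit (r : Finset α → ℕ) (C : Finset α) : Prop :=
  r C ≠ C.card ∧ ∀ D ⊂ C, r D = D.card

/-- Connectedness of the matroid with rank function `r`. -/
def IsRankConnected (r : Finset α → ℕ) : Prop :=
  ∀ e e' : α, e ≠ e' → ∃ C : Finset α, IsRankCircuit r C ∧ e ∈ C ∧ e' ∈ C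

variable [DecidableEq α]

/-- The rank axioms of a matroid, for a function on the finite subsets of a ground set `α` which
may itself be infinite. -/
structure IsRankFunction_s18 (r : Finset α → ℕ) : Prop where
  le_card : ∀ A, r A ≤ A.card
  mono : Monotone r
  submod : ∀ A B, r (A ∪ B) + r (A ∩ B) ≤ r A + r B

namespace IsRankFunction_s18

theorem rank_union_le_of_forall_insert (hr : IsRankFunction_s18 r) {A S : Finset α}
    (hS : ∀ g ∈ S, r (insert g A) ≤ r A) : r (A ∪ S) ≤ r A := by
  induction S using Finset.induction_on with
  | empty => rw [Finset.union_empty]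
  | insert g S _ ih =>
    rw [Finset.forall_mem_insert] at hS
    have hsubmod := hr.submod (A ∪ S) (insert g A)
    have hunion : r (A ∪ insert g S) ≤ r ((A ∪ S) ∪ insert g A) := hr.mono (by grind)
    have hinter : r A ≤ r ((A ∪ S) ∩ insert g A) := hr.mono (by grind)
    have := ih hS.2
    lia

theorem rank_pair_le_two (hr : IsRankFunction_s18 r) (e g : α) : r {e, g} ≤ 2 :=
  (hr.le_card _).trans Finset.card_le_two

theorem ne_of_rank_pair_eq_two (hr : IsRankFunction_s18 r) {e g : α} (h : r {e, g} = 2) : e ≠ g := by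
  rintro rfl
  have := hr.le_card {e}
  rw [Finset.pair_eq_singleton] at h
  rw [Finset.card_singleton] at this
  lia

theorem exists_rank_pair_eq_two (hr : IsRankFunction_s18 r) {e : α} (he : r {e} = 1) {S : Finset α}
    (hS : 2 ≤ r S) : ∃ g ∈ S, r {e, g} = 2 := by
  by_contra! hparallel
  have hspan : r ({e} ∪ S) ≤ r {e} := hr.rank_union_le_of_forall_insert fun g hg => by
    have := hparallel g hg
    have := hr.rank_pair_le_two e g
    rw [Finset.pair_comm g e]
    lia
  have hmono : r S ≤ r ({e} ∪ S) := hr.mono Finset.subset_union_right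
  lia

theorem rank_singleton_eq_one (hr : IsRankFunction_s18 r) (hconn : IsRankConnected r) {S : Finset α}
    (hS : 2 ≤ r S) (e : α) : r {e} = 1 := by
  obtain ⟨e', -, hne⟩ := Finset.exists_mem_ne (hS.trans (hr.le_card S)) e
  obtain ⟨C, hC, heC, he'C⟩ := hconn e e' hne.symm
  have hssubset : {e} ⊂ C :=
    ⟨Finset.singleton_subset_iff.2 heC, fun h => hne (Finset.mem_singleton.1 (h he'C))⟩
  simpa only [Finset.card_singleton] using hC.2 {e} hssubset

theorem rank_pair_eq_two_or_exists (hr : IsRankFunction_s18 r) (hnonloop : ∀ e, r {e} = 1)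
    {S : Finset α} (hS : 2 ≤ r S) (e e' : α) :
    r {e, e'} = 2 ∨ ∃ g, r {e, g} = 2 ∧ r {e', g} = 2 := by
  refine or_iff_not_imp_left.2 fun hparallel => ?_
  obtain ⟨g, -, heg⟩ := hr.exists_rank_pair_eq_two (hnonloop e) hS
  obtain ⟨g', hg', he'g'⟩ := hr.exists_rank_pair_eq_two (hnonloop e') heg.ge
  rcases Finset.mem_insert.1 hg' with rfl | hg'
  · exact absurd (Finset.pair_comm e' g' ▸ he'g') hparallel
  · exact ⟨g, heg, Finset.mem_singleton.1 hg' ▸ he'g'⟩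

end IsRankFunction_s18

end RankFunctions

section Representations

variable {α Ω : Type*} [DecidableEq α] {r : Finset α → ℕ} {p : Ω → ℝ} {Ωe : α → Type*}
  {X : ∀ e, Ω → Ωe e}

/-- Discrete probability space representations, by the point masses `p` and the variables `X`, of
the matroid with rank function `r`, where the variables may be constant. -/
structure IsProbRepresentation (r : Finset α → ℕ) (p : Ω → ℝ) (X : ∀ e, Ω → Ωe e) : Prop where
  nonneg : ∀ ω, 0 ≤ p ω
  tsum_eq_one : ∑' ω, p ω = 1
  indep : ∀ A : Finset α, r A = A.card → IsJointlyIndep p X A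
  det : ∀ C : Finset α, IsRankCircuit r C → ∀ x ∈ C,
    ∃ f : ((e : ↥(C.erase x)) → Ωe e.1) → Ωe x, ∀ ω, X x ω = f (jointRV X (C.erase x) ω)

namespace IsProbRepresentation

theorem summable (hX : IsProbRepresentation r p X) : Summable p := by
  by_contra h
  exact zero_ne_one ((tsum_eq_zero_of_not_summable h).symm.trans hX.tsum_eq_one)

theorem exists_pos (hX : IsProbRepresentation r p X) : ∃ ω, 0 < p ω := by
  by_contra! h
  exact (tsum_nonpos h).not_gt (hX.tsum_eq_one ▸ zero_lt_one)

theorem prMass_pos_of_pos (hX : IsProbRepresentation r p X) {S : Type*} (Y : Ω → S) {ω : Ω}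
    (hω : 0 < p ω) : 0 < prMass p Y (Y ω) :=
  prMass_apply_pos hX.nonneg hX.summable Y hω

theorem prMass_eq_of_mem_circuit (hX : IsProbRepresentation r p X) {C : Finset α}
    (hC : IsRankCircuit r C) {x y : α} (hx : x ∈ C) (hy : y ∈ C) {ω : Ω} (hω : 0 < p ω) :
    prMass p (X x) (X x ω) = prMass p (X y) (X y ω) := by
  have hprod (z : α) (hz : z ∈ C) :
      prMass p (jointRV X C) (jointRV X C ω) * prMass p (X z) (X z ω) =
        ∏ e ∈ C, prMass p (X e) (X e ω) := by
    obtain ⟨f, hf⟩ := hX.det C hC z hz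
    exact prMass_jointRV_mul_prMass hz (hX.indep _ (hC.2 _ (Finset.erase_ssubset hz)))
      (fun w w' h => by rw [hf w, hf w', h]) ω
  exact mul_left_cancel₀ (hX.prMass_pos_of_pos (jointRV X C) hω).ne'
    ((hprod x hx).trans (hprod y hy).symm)

theorem prMass_eq_of_rank_pair_eq_two (hX : IsProbRepresentation r p X) (hr : IsRankFunction_s18 r)
    (hconn : IsRankConnected r) {x y : α} (hxy : r {x, y} = 2) {a : Ωe x} {b : Ωe y}
    (ha : 0 < prMass p (X x) a) (hb : 0 < prMass p (X y) b) :
    prMass p (X x) a = prMass p (X y) b := by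
  have hne : x ≠ y := hr.ne_of_rank_pair_eq_two hxy
  obtain ⟨ωx, hωx, rfl⟩ := exists_pos_of_prMass_pos ha
  obtain ⟨ωy, hωy, rfl⟩ := exists_pos_of_prMass_pos hb
  have hindep : IsJointlyIndep p X {x, y} :=
    hX.indep _ (hxy.trans (Finset.card_pair hne).symm)
  obtain ⟨ω, hω, hval⟩ := hindep.exists_pos_forall_eq hX.nonneg hX.summable
    (Function.update (fun _ => ωy) x ωx) (by simp [hne.symm, hωx, hωy])
  have hval_x : X x ω = X x ωx := by simpa using hval x (by simp)
  have hval_y : X y ω = X y ωy := by simpa [hne.symm] using hval y (by simp)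
  obtain ⟨C, hC, hxC, hyC⟩ := hconn x y hne
  rw [← hval_x, ← hval_y]
  exact hX.prMass_eq_of_mem_circuit hC hxC hyC hω

end IsProbRepresentation

theorem statement18_general (hr : IsRankFunction_s18 r) (hconn : IsRankConnected r) {S : Finset α}
    (hS : 2 ≤ r S) (hX : IsProbRepresentation r p X) :
    (∀ (e e' : α) (a : Ωe e) (b : Ωe e'),
        0 < prMass p (X e) a → 0 < prMass p (X e') b →
          prMass p (X e) a = prMass p (X e') b) ∧
      (∀ e : α, {a : Ωe e | 0 < prMass p (X e) a}.Finite) := by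
  have huniform (e e' : α) (a : Ωe e) (b : Ωe e') (ha : 0 < prMass p (X e) a)
      (hb : 0 < prMass p (X e') b) : prMass p (X e) a = prMass p (X e') b := by
    rcases hr.rank_pair_eq_two_or_exists (hr.rank_singleton_eq_one hconn hS) hS e e' with
      hee' | ⟨g, heg, he'g⟩
    · exact hX.prMass_eq_of_rank_pair_eq_two hr hconn hee' ha hb
    · obtain ⟨ω, hω⟩ := hX.exists_pos
      have hg : 0 < prMass p (X g) (X g ω) := hX.prMass_pos_of_pos (X g) hω
      exact (hX.prMass_eq_of_rank_pair_eq_two hr hconn heg ha hg).trans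
        (hX.prMass_eq_of_rank_pair_eq_two hr hconn he'g hb hg).symm
  exact ⟨huniform, fun e => finite_setOf_prMass_pos hX.summable (huniform e e)⟩

end Representations

/-- Let `M` be a connected matroid of rank at least two on a finite ground
set, and let `{X_e}` together with a discrete probability measure (point masses `p`) be a
discrete probability space representation of `M`. Then the variables `X_e` are all
uniformly distributed with a common positive point mass: any two values taken with positive
probability (by any two of the variables) have equal probability; in particular each `X_e`
takes only finitely many values with positive probability. -/
theorem statement18 {α : Type*} [Fintype α] [DecidableEq α] (r : Finset α → ℕ)
    (hr_le : ∀ A : Finset α, r A ≤ A.card)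
    (hr_mono : ∀ ⦃A B : Finset α⦄, A ⊆ B → r A ≤ r B)
    (hr_submod : ∀ A B : Finset α, r (A ∪ B) + r (A ∩ B) ≤ r A + r B)
    -- connected: every two distinct elements lie in a common circuit
    (hconn : ∀ e e' : α, e ≠ e' → ∃ C : Finset α,
      (r C ≠ C.card ∧ ∀ D ⊂ C, r D = D.card) ∧ e ∈ C ∧ e' ∈ C)
    -- rank at least two
    (hrk : 2 ≤ r Finset.univ)
    {Ω : Type*} (p : Ω → ℝ) (hp0 : ∀ ω, 0 ≤ p ω) (hp1 : ∑' ω, p ω = 1)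
    (Ωe : α → Type*) (X : ∀ e, Ω → Ωe e)
    -- independence
    (hindep : ∀ A : Finset α, r A = A.card → ∀ y : (e : ↥A) → Ωe e.1,
      prMass p (jointRV X A) y = ∏ e : ↥A, prMass p (X e.1) (y e))
    -- determination
    (hdet : ∀ C : Finset α, r C ≠ C.card → (∀ D ⊂ C, r D = D.card) → ∀ x ∈ C,
      ∃ f : ((e : ↥(C.erase x)) → Ωe e.1) → Ωe x,
        ∀ ω, X x ω = f (jointRV X (C.erase x) ω))
    -- nontriviality
    (hnontriv : ∀ e : α, r {e} ≠ 0 →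
      ∃ ω ω', 0 < p ω ∧ 0 < p ω' ∧ X e ω ≠ X e ω') :
    (∀ (e e' : α) (a : Ωe e) (b : Ωe e'),
        0 < prMass p (X e) a → 0 < prMass p (X e') b →
          prMass p (X e) a = prMass p (X e') b) ∧
      (∀ e : α, {a : Ωe e | 0 < prMass p (X e) a}.Finite) :=
  statement18_general ⟨hr_le, hr_mono, hr_submod⟩ hconn hrk
    ⟨hp0, hp1, hindep, fun C hC => hdet C hC.1 hC.2⟩
end
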